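/- There exists ε > 0 such that for every real number q with 0 < q < ε the following holds: let R(q) := q^{1/5}·(q;q⁵)∞·(q⁴;q⁵)∞ / ((q²;q⁵)∞·(q³;q⁵)∞) and k := R(q)·R(q²)². Then R(q)⁵ = k(1−k)²/(1+k)² and q = q₄( 64k(1+k−k²)⁵ / ((1+k²)²·((1+11k−k²)² − 125k²)²) ). -/

import Mathlib

open scoped Real

/-- The infinite q-Pochhammer symbol `(x;q)∞ = ∏_{n=0}^∞ (1 − x qⁿ)` (real version). -/
noncomputable def qPochInfR (x q : ℝ) : ℝ := ∏' n : ℕ, (1 - x * q ^ n)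

/-- The Rogers–Ramanujan q-product
`R(q) = q^{1/5} (q;q⁵)∞ (q⁴;q⁵)∞ / ((q²;q⁵)∞ (q³;q⁵)∞)`. -/
noncomputable def Rq (q : ℝ) : ℝ :=
  q ^ ((1 : ℝ) / 5) * qPochInfR q (q ^ 5) * qPochInfR (q ^ 4) (q ^ 5)
    / (qPochInfR (q ^ 2) (q ^ 5) * qPochInfR (q ^ 3) (q ^ 5))

/-- The rising factorial `(a)_n = a(a+1)⋯(a+n−1)`. -/
noncomputable def risingFact (a : ℝ) (n : ℕ) : ℝ :=
  ∏ i ∈ Finset.range n, (a + i)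

/-- The Gaussian hypergeometric function `₂F₁(a,b;c;z)`. -/
noncomputable def hyp2F1 (a b c z : ℝ) : ℝ :=
  ∑' n : ℕ, risingFact a n * risingFact b n / (risingFact c n * n.factorial) * z ^ n

/-- The signature-4 elliptic nome
`q₄(α) = exp(−√2·π·₂F₁(1/4,3/4;1;1−α)/₂F₁(1/4,3/4;1;α))`. -/
noncomputable def nome4 (α : ℝ) : ℝ :=
  Real.exp (-(Real.sqrt 2) * Real.pi
    * hyp2F1 (1/4) (3/4) 1 (1 - α) / hyp2F1 (1/4) (3/4) 1 α)

/-!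
Split modulo `10`, the products `R(q)`, `R(q²)` and `k` become quotients of products over residue
classes. Theta identities coming from sublattices of `ℤ²`, together with the Jacobi triple product,
write `1 + k` and `1 - k` as such quotients, which gives the formula for `R(q)⁵`, and
`ψ(q)² / ψ(q⁵)²` and `φ(-q)² / φ(-q⁵)²` as rational functions of `k`. Eliminating `(q⁵; q¹⁰)∞` from
these identifies the argument of the nome with `α(q) = 64 q ψ(q)⁸ / (64 q ψ(q)⁸ + φ(-q)⁸)`.

It remains to prove `q₄(α(q)) = q`. Let `F = ₂F₁(1/4, 3/4; 1; ·)` and `θ(q) = φ(q)⁴ + 16 q ψ(q²)⁴`.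
A quadratic transformation of `F`, proved by comparing two solutions of one differential equation
that are regular at its singular point, says exactly that `F(α(q))² / θ(q)` is invariant under
`q ↦ q²`; letting `q → 0`, this quotient is `1`. By Poisson summation, for `q = e^(-πa)` and
`p = e^(-2π/a)` one has `α(p) = 1 - α(q)` and `θ(p) = (a² / 2) θ(q)`, hence
`F(1 - α(q)) / F(α(q)) = a / √2`, which is the inversion of the nome.
-/

open Filter Finset
open scoped Topology

lemma pow_mem_Ioo {q : ℝ} (hq : q ∈ Set.Ioo (0 : ℝ) 1) {n : ℕ} (hn : n ≠ 0) :
    q ^ n ∈ Set.Ioo (0 : ℝ) 1 :=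
  ⟨pow_pos hq.1 n, pow_lt_one₀ hq.1.le hq.2 hn⟩

lemma tsum_eq_sum_tsum_of_equiv {ι κ β : Type*} [Fintype ι] {f : β → ℝ} (hf : Summable f)
    (e : ι × κ ≃ β) : ∑' b, f b = ∑ i, ∑' k, f (e (i, k)) := by
  have hfe : Summable fun p => f (e p) := e.summable_iff.2 hf
  rw [← e.tsum_eq f, hfe.tsum_prod, tsum_fintype]

/-! ### Bilateral theta series -/

section Theta

/-- The exponent `n(n - 1)/2` of the general term of a theta series, for every integer `n`. -/
def triangular (n : ℤ) : ℤ := n * (n - 1) / 2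

lemma two_mul_triangular (n : ℤ) : 2 * triangular n = n * (n - 1) :=
  Int.mul_ediv_cancel' (Int.even_mul_pred_self n).two_dvd

lemma triangular_add (m n : ℤ) : triangular (m + n) = triangular m + triangular n + m * n := by
  linarith [two_mul_triangular m, two_mul_triangular n, two_mul_triangular (m + n)]

lemma triangular_neg (n : ℤ) : triangular (-n) = triangular n + n := by
  linarith [two_mul_triangular n, two_mul_triangular (-n)]

lemma triangular_mul (m n : ℤ) :
    triangular (m * n) = m ^ 2 * triangular n + triangular m * n := by
  refine mul_left_cancel₀ two_ne_zero ?_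
  linear_combination two_mul_triangular (m * n) - m ^ 2 * two_mul_triangular n
    - n * two_mul_triangular m

lemma triangular_natCast (n : ℕ) : triangular n = n.choose 2 := by
  cases n with
  | zero => simp [triangular]
  | succ n => simp [triangular, Nat.choose_two_right]

/-- The general term `q ^ (n(n - 1)/2) * z ^ n` of the theta series. -/
noncomputable def thetaTerm (z q : ℝ) (n : ℤ) : ℝ := q ^ triangular n * z ^ n

/-- The bilateral theta series `∑ q ^ (n(n - 1)/2) * z ^ n`; in Ramanujan's notation it is
`f(z, q / z)`. -/
noncomputable def theta (z q : ℝ) : ℝ := ∑' n : ℤ, thetaTerm z q n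

variable {z w q : ℝ}

lemma thetaTerm_natCast (z q : ℝ) (n : ℕ) : thetaTerm z q n = q ^ n.choose 2 * z ^ n := by
  rw [thetaTerm, triangular_natCast, zpow_natCast, zpow_natCast]

lemma thetaTerm_ne_zero (hz : z ≠ 0) (hq : q ≠ 0) (n : ℤ) : thetaTerm z q n ≠ 0 :=
  mul_ne_zero (zpow_ne_zero _ hq) (zpow_ne_zero _ hz)

lemma thetaTerm_add (hz : z ≠ 0) (hq : q ≠ 0) (m n : ℤ) :
    thetaTerm z q (m + n) = thetaTerm z q m * thetaTerm (q ^ m * z) q n := by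
  rw [thetaTerm, thetaTerm, thetaTerm, triangular_add, zpow_add₀ hq, zpow_add₀ hq, zpow_add₀ hz,
    mul_zpow, zpow_mul]
  ring

lemma thetaTerm_add_one (hz : z ≠ 0) (hq : q ≠ 0) (n : ℤ) :
    thetaTerm z q (n + 1) = q ^ n * z * thetaTerm z q n := by
  rw [thetaTerm_add hz hq, thetaTerm, thetaTerm, show triangular 1 = 0 from rfl, zpow_zero,
    zpow_one]
  ring

lemma thetaTerm_neg (hq : q ≠ 0) (hzw : z * w = q) (n : ℤ) :
    thetaTerm z q (-n) = thetaTerm w q n := by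
  have hz : z ≠ 0 := left_ne_zero_of_mul (hzw ▸ hq)
  have hpow : q ^ n = z ^ n * w ^ n := by rw [← hzw, mul_zpow]
  rw [thetaTerm, thetaTerm, triangular_neg, zpow_add₀ hq, hpow, zpow_neg]
  field_simp [zpow_ne_zero n hz]

lemma summable_thetaTerm_natCast (hz : z ≠ 0) (hq : q ∈ Set.Ioo (0 : ℝ) 1) :
    Summable fun n : ℕ => thetaTerm z q n := by
  have hterm (n : ℕ) : thetaTerm z q n ≠ 0 := thetaTerm_ne_zero hz hq.1.ne' n
  have hratio (n : ℕ) : ‖thetaTerm z q (n + 1 : ℕ)‖ / ‖thetaTerm z q n‖ = q ^ n * |z| := by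
    rw [div_eq_iff (norm_ne_zero_iff.2 (hterm n)), Nat.cast_add_one,
      thetaTerm_add_one hz hq.1.ne', zpow_natCast, norm_mul, norm_mul,
      Real.norm_of_nonneg (pow_pos hq.1 n).le, Real.norm_eq_abs z]
  refine summable_of_ratio_test_tendsto_lt_one one_pos (.of_forall hterm) ?_
  simp only [hratio]
  simpa only [zero_mul] using (tendsto_pow_atTop_nhds_zero_of_lt_one hq.1.le hq.2).mul_const |z|

lemma summable_thetaTerm (hz : z ≠ 0) (hq : q ∈ Set.Ioo (0 : ℝ) 1) :
    Summable (thetaTerm z q) := by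
  refine .of_nat_of_neg (summable_thetaTerm_natCast hz hq) ?_
  simp only [thetaTerm_neg hq.1.ne' (mul_div_cancel₀ q hz)]
  exact summable_thetaTerm_natCast (div_ne_zero hq.1.ne' hz) hq

lemma theta_eq_of_mul_eq (hq : q ≠ 0) (hzw : z * w = q) : theta w q = theta z q := by
  rw [theta, theta, ← (Equiv.neg ℤ).tsum_eq (thetaTerm z q)]
  exact tsum_congr fun n => (thetaTerm_neg hq hzw n).symm

lemma mul_theta_of_eq_mul (hz : z ≠ 0) (hq : q ≠ 0) (hw : w = q * z) :
    z * theta w q = theta z q := by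
  rw [theta, theta, ← (Equiv.addRight (1 : ℤ)).tsum_eq (thetaTerm z q), ← tsum_mul_left, hw]
  refine tsum_congr fun n => ?_
  rw [Equiv.coe_addRight, thetaTerm_add_one hz hq, thetaTerm, thetaTerm, mul_zpow]
  ring

lemma thetaTerm_mul_add (hz : z ≠ 0) (hq : q ≠ 0) (m c : ℕ) (n : ℤ) :
    thetaTerm z q (n * m + c) = q ^ c.choose 2 * z ^ c *
      thetaTerm (q ^ (m.choose 2 + m * c) * z ^ m) (q ^ m ^ 2) n := by
  have hexp : triangular (n * m + c) = ((m ^ 2 : ℕ) : ℤ) * triangular n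
      + ((m.choose 2 + m * c : ℕ) : ℤ) * n + (c.choose 2 : ℕ) := by
    rw [mul_comm n, triangular_add, triangular_mul, triangular_natCast, triangular_natCast]
    push_cast
    ring
  rw [thetaTerm, thetaTerm, hexp, zpow_add₀ hq, zpow_add₀ hq, zpow_add₀ hz, mul_comm n, zpow_mul,
    zpow_mul, zpow_mul, mul_zpow]
  simp only [zpow_natCast]
  ring

lemma theta_dissection (hz : z ≠ 0) (hq : q ∈ Set.Ioo (0 : ℝ) 1) (m : ℕ) [NeZero m] :
    theta z q = ∑ c ∈ range m,
      q ^ c.choose 2 * z ^ c * theta (q ^ (m.choose 2 + m * c) * z ^ m) (q ^ m ^ 2) := by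
  rw [sum_range, theta, tsum_eq_sum_tsum_of_equiv (summable_thetaTerm hz hq)
    ((Equiv.prodComm (Fin m) ℤ).trans (Int.divModEquiv m).symm)]
  refine sum_congr rfl fun c _ => ?_
  rw [theta, ← tsum_mul_left]
  exact tsum_congr fun n => thetaTerm_mul_add hz hq.1.ne' m c n

lemma theta_mul_theta {q' : ℝ} (hz : z ≠ 0) (hw : w ≠ 0) (hq : q ∈ Set.Ioo (0 : ℝ) 1)
    (hq' : q' ∈ Set.Ioo (0 : ℝ) 1) :
    theta z q * theta w q' = ∑' p : ℤ × ℤ, thetaTerm z q p.1 * thetaTerm w q' p.2 :=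
  tsum_mul_tsum_of_summable_norm (summable_thetaTerm hz hq).norm (summable_thetaTerm hw hq').norm

lemma theta_bisection (hz : z ≠ 0) (hq : q ∈ Set.Ioo (0 : ℝ) 1) :
    theta z q = theta (q * z ^ 2) (q ^ 4) + z * theta (q ^ 3 * z ^ 2) (q ^ 4) := by
  simpa [sum_range_succ] using theta_dissection hz hq 2

/-- The lattice `ℤ²` is the union of `a² + 1` cosets of the sublattice spanned by `(a, -1)` and
`(1, a)`; the coset of `(x, y)` is determined by `x + a * y` modulo `a² + 1`. -/
def gaussianCosets (a : ℕ) : Fin (a ^ 2 + 1) × (ℤ × ℤ) ≃ ℤ × ℤ where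
  toFun p := (a * p.2.1 + p.2.2 + (p.1 : ℕ), a * p.2.2 - p.2.1)
  invFun p :=
    let d := Int.divModEquiv (a ^ 2 + 1) (p.1 + a * p.2)
    (d.2, (a * d.1 - p.2, d.1))
  left_inv := by
    rintro ⟨c, m, n⟩
    have hlin : (a * m + n + (c : ℕ) : ℤ) + a * (a * n - m) =
        (Int.divModEquiv (a ^ 2 + 1)).symm (n, c) := by
      simp only [Int.divModEquiv, Equiv.coe_fn_symm_mk]
      push_cast
      ring
    simp only [hlin, Equiv.apply_symm_apply, sub_sub_cancel]
  right_inv := by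
    rintro ⟨x, y⟩
    have hdiv := (Int.divModEquiv (a ^ 2 + 1)).symm_apply_apply (x + a * y)
    simp only [Int.divModEquiv, Equiv.coe_fn_symm_mk, Equiv.coe_fn_mk] at hdiv ⊢
    refine Prod.ext ?_ (by ring)
    push_cast at hdiv ⊢
    linear_combination hdiv

lemma thetaTerm_mul_thetaTerm_gaussianCosets (hz : z ≠ 0) (hw : w ≠ 0) (hq : q ≠ 0)
    (a c : ℕ) (m n : ℤ) :
    thetaTerm z q (a * m + n + c) * thetaTerm w q (a * n - m) = q ^ c.choose 2 * z ^ c *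
      (thetaTerm (q ^ (a.choose 2 + 1 + a * c) * z ^ a / w) (q ^ (a ^ 2 + 1)) m *
        thetaTerm (q ^ (a.choose 2 + c) * z * w ^ a) (q ^ (a ^ 2 + 1)) n) := by
  have hexp : triangular (a * m + n + c) + triangular (a * n - m) = (c.choose 2 : ℕ)
      + (((a ^ 2 + 1 : ℕ) : ℤ) * triangular m + ((a.choose 2 + 1 + a * c : ℕ) : ℤ) * m)
      + (((a ^ 2 + 1 : ℕ) : ℤ) * triangular n + ((a.choose 2 + c : ℕ) : ℤ) * n) := by
    rw [sub_eq_add_neg]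
    simp only [triangular_add, triangular_mul, triangular_neg, triangular_natCast]
    push_cast
    ring
  simp only [thetaTerm]
  rw [mul_mul_mul_comm, ← zpow_add₀ hq, hexp, zpow_add₀ hq, zpow_add₀ hq, zpow_add₀ hq,
    zpow_add₀ hq, zpow_add₀ hz, zpow_add₀ hz, zpow_sub₀ hw]
  simp only [zpow_mul, mul_zpow, div_zpow, zpow_natCast]
  ring

lemma theta_mul_theta_eq_sum (hz : z ≠ 0) (hw : w ≠ 0) (hq : q ∈ Set.Ioo (0 : ℝ) 1) (a : ℕ) :
    theta z q * theta w q = ∑ c ∈ range (a ^ 2 + 1), q ^ c.choose 2 * z ^ c *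
      (theta (q ^ (a.choose 2 + 1 + a * c) * z ^ a / w) (q ^ (a ^ 2 + 1)) *
        theta (q ^ (a.choose 2 + c) * z * w ^ a) (q ^ (a ^ 2 + 1))) := by
  have hq0 : q ≠ 0 := hq.1.ne'
  have hqa := pow_mem_Ioo hq (a ^ 2).succ_ne_zero
  rw [sum_range, theta_mul_theta hz hw hq hq,
    tsum_eq_sum_tsum_of_equiv (summable_mul_of_summable_norm (summable_thetaTerm hz hq).norm
      (summable_thetaTerm hw hq).norm) (gaussianCosets a)]
  refine sum_congr rfl fun c _ => ?_
  rw [theta_mul_theta (by positivity) (by positivity) hqa hqa, ← tsum_mul_left]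
  exact tsum_congr fun p => thetaTerm_mul_thetaTerm_gaussianCosets hz hw hq0 a c p.1 p.2

lemma theta_mul_theta_eq_add (hz : z ≠ 0) (hw : w ≠ 0) (hq : q ∈ Set.Ioo (0 : ℝ) 1) :
    theta z q * theta w q = theta (q * z / w) (q ^ 2) * theta (z * w) (q ^ 2) +
      z * (theta (q ^ 2 * z / w) (q ^ 2) * theta (q * z * w) (q ^ 2)) := by
  simpa [sum_range_succ] using theta_mul_theta_eq_sum hz hw hq 1

lemma theta_sq_eq_add (hz : z ≠ 0) (hq : q ∈ Set.Ioo (0 : ℝ) 1) :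
    theta z q ^ 2 = theta (q ^ 2 * z) (q ^ 5) * theta (q * z ^ 3) (q ^ 5) +
      z * (theta (q ^ 4 * z) (q ^ 5) * theta (q ^ 2 * z ^ 3) (q ^ 5)) +
      q * z ^ 2 * (theta (q ^ 6 * z) (q ^ 5) * theta (q ^ 3 * z ^ 3) (q ^ 5)) +
      q ^ 3 * z ^ 3 * (theta (q ^ 8 * z) (q ^ 5) * theta (q ^ 4 * z ^ 3) (q ^ 5)) +
      q ^ 6 * z ^ 4 * (theta (q ^ 10 * z) (q ^ 5) * theta (q ^ 5 * z ^ 3) (q ^ 5)) := by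
  have hleft (c : ℕ) : q ^ (2 + 2 * c) * z ^ 2 / z = q ^ (2 + 2 * c) * z := by
    field_simp
  have hright (c : ℕ) : q ^ (1 + c) * z * z ^ 2 = q ^ (1 + c) * z ^ 3 := by ring
  simpa [sum_range_succ, Nat.choose, ← pow_two, hleft, hright] using
    theta_mul_theta_eq_sum hz hz hq 2

end Theta

/-! ### Infinite products -/

section Pochhammer

variable {q : ℝ}

lemma multipliable_one_sub_mul_pow (x : ℝ) (hq : q ∈ Set.Ioo (0 : ℝ) 1) :
    Multipliable fun n : ℕ => 1 - x * q ^ n := by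
  simpa only [sub_eq_add_neg] using Real.multipliable_one_add_of_summable
    ((summable_geometric_of_lt_one hq.1.le hq.2).mul_left x).neg

lemma tendsto_prod_qPochInfR (x : ℝ) (hq : q ∈ Set.Ioo (0 : ℝ) 1) :
    Tendsto (fun N : ℕ => ∏ n ∈ range N, (1 - x * q ^ n)) atTop (𝓝 (qPochInfR x q)) :=
  (multipliable_one_sub_mul_pow x hq).hasProd.tendsto_prod_nat

lemma one_sub_mul_pow_pos {x : ℝ} (hx : x < 1) (hq : q ∈ Set.Ioo (0 : ℝ) 1) (n : ℕ) :
    0 < 1 - x * q ^ n := by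
  nlinarith [pow_pos hq.1 n, pow_le_one₀ hq.1.le hq.2.le (n := n)]

lemma qPochInfR_pos {x : ℝ} (hx : x < 1) (hq : q ∈ Set.Ioo (0 : ℝ) 1) : 0 < qPochInfR x q := by
  have hfactor := one_sub_mul_pow_pos hx hq
  refine lt_of_le_of_ne (ge_of_tendsto' (tendsto_prod_qPochInfR x hq) fun N =>
    prod_nonneg fun n _ => (hfactor n).le) (Ne.symm ?_)
  simpa only [qPochInfR, sub_eq_add_neg] using
    tprod_one_add_ne_zero_of_summable (f := fun n : ℕ => -(x * q ^ n))
      (fun n => by simpa only [sub_eq_add_neg] using (hfactor n).ne')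
      ((summable_geometric_of_lt_one hq.1.le hq.2).mul_left x).neg.norm

lemma qPochInfR_self_pos (hq : q ∈ Set.Ioo (0 : ℝ) 1) : 0 < qPochInfR q q :=
  qPochInfR_pos hq.2 hq

lemma qPochInfR_eq_one_sub_mul (x : ℝ) (hq : q ∈ Set.Ioo (0 : ℝ) 1) :
    qPochInfR x q = (1 - x) * qPochInfR (x * q) q := by
  refine tendsto_nhds_unique ((tendsto_prod_qPochInfR x hq).comp (tendsto_add_atTop_nat 1))
    (((tendsto_prod_qPochInfR (x * q) hq).const_mul (1 - x)).congr fun N => ?_)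
  rw [Function.comp_apply, prod_range_succ', pow_zero, mul_one, mul_comm]
  simp only [pow_succ', mul_assoc]

lemma qPochInfR_mul_qPochInfR_neg (x : ℝ) (hq : q ∈ Set.Ioo (0 : ℝ) 1) :
    qPochInfR x q * qPochInfR (-x) q = qPochInfR (x ^ 2) (q ^ 2) := by
  rw [qPochInfR, qPochInfR, ← (multipliable_one_sub_mul_pow x hq).tprod_mul
    (multipliable_one_sub_mul_pow (-x) hq)]
  exact tprod_congr fun n => by ring

lemma qPochInfR_eq_prod_pow (x : ℝ) (hq : q ∈ Set.Ioo (0 : ℝ) 1) {m : ℕ} (hm : m ≠ 0) :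
    qPochInfR x q = ∏ i ∈ range m, qPochInfR (x * q ^ i) (q ^ m) := by
  have hblock (N : ℕ) : ∏ n ∈ range (m * N), (1 - x * q ^ n) =
      ∏ i ∈ range m, ∏ n ∈ range N, (1 - x * q ^ i * (q ^ m) ^ n) := by
    rw [Finset.prod_comm]
    induction N with
    | zero => simp
    | succ N ih =>
      rw [mul_add_one, prod_range_add, ih, prod_range_succ]
      exact congrArg _ (prod_congr rfl fun i _ => by ring)
  refine tendsto_nhds_unique ((tendsto_prod_qPochInfR x hq).comp
    (tendsto_id.const_mul_atTop' hm.bot_lt)) ?_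
  simp only [Function.comp_def, id, hblock]
  exact tendsto_finsetProd _ fun i _ => tendsto_prod_qPochInfR _ (pow_mem_Ioo hq hm)

end Pochhammer

/-! ### The Jacobi triple product -/

section GaussianBinomial

variable {R : Type*} [CommRing R]

/-- The Gaussian binomial coefficient `[n, k]_q`, defined by the `q`-Pascal recursion. -/
def gaussBinom (q : R) : ℕ → ℕ → R
  | _, 0 => 1
  | 0, _ + 1 => 0
  | n + 1, k + 1 => gaussBinom q n (k + 1) + q ^ (n - k) * gaussBinom q n k

/-- The finite product `(q; q)_n = (1 - q) (1 - q²) ⋯ (1 - qⁿ)`. -/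
def qFactorial (q : R) (n : ℕ) : R := ∏ k ∈ range n, (1 - q * q ^ k)

@[simp] lemma gaussBinom_zero_right (q : R) (n : ℕ) : gaussBinom q n 0 = 1 := by
  cases n <;> rfl

lemma gaussBinom_eq_zero_of_lt (q : R) : ∀ {n k : ℕ}, n < k → gaussBinom q n k = 0
  | 0, _ + 1, _ => rfl
  | n + 1, k + 1, h => by
    rw [gaussBinom, gaussBinom_eq_zero_of_lt q (by omega : n < k + 1),
      gaussBinom_eq_zero_of_lt q (by omega : n < k), mul_zero, add_zero]

lemma prod_one_add_mul_pow (q x : R) (n : ℕ) :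
    ∏ k ∈ range n, (1 + x * q ^ k) =
      ∑ k ∈ range (n + 1), gaussBinom q n k * q ^ k.choose 2 * x ^ k := by
  induction n with
  | zero => simp
  | succ n ih =>
    have hpascal : ∀ k ∈ range (n + 1),
        gaussBinom q (n + 1) (k + 1) * q ^ (k + 1).choose 2 * x ^ (k + 1) =
          gaussBinom q n (k + 1) * q ^ (k + 1).choose 2 * x ^ (k + 1) +
            gaussBinom q n k * q ^ k.choose 2 * x ^ k * (x * q ^ n) := fun k hk => by
      obtain ⟨d, rfl⟩ := Nat.exists_eq_add_of_le (mem_range_succ_iff.1 hk)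
      rw [gaussBinom, Nat.choose_succ_succ' k 1, Nat.choose_one_right, Nat.add_sub_cancel_left]
      ring
    rw [prod_range_succ, ih, mul_one_add, sum_range_succ' _ (n + 1), sum_congr rfl hpascal,
      sum_add_distrib, ← sum_mul, add_right_comm]
    congr 1
    rw [sum_range_succ', sum_range_succ _ n, gaussBinom_eq_zero_of_lt q n.lt_succ_self]
    simp

lemma qFactorial_succ (q : R) (n : ℕ) :
    qFactorial q (n + 1) = qFactorial q n * (1 - q * q ^ n) :=
  prod_range_succ _ _

lemma qFactorial_mul_qFactorial_mul_gaussBinom (q : R) : ∀ i j : ℕ,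
    qFactorial q i * qFactorial q j * gaussBinom q (i + j) j = qFactorial q (i + j)
  | i, 0 => by simp [qFactorial]
  | 0, j + 1 => by
    have ih := qFactorial_mul_qFactorial_mul_gaussBinom q 0 j
    rw [zero_add] at ih ⊢
    rw [gaussBinom, gaussBinom_eq_zero_of_lt q j.lt_succ_self, Nat.sub_self, qFactorial_succ]
    linear_combination (1 - q * q ^ j) * ih
  | i + 1, j + 1 => by
    have ih₁ := qFactorial_mul_qFactorial_mul_gaussBinom q i (j + 1)
    have ih₂ := qFactorial_mul_qFactorial_mul_gaussBinom q (i + 1) j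
    rw [← add_assoc] at ih₁ ⊢
    rw [add_right_comm i 1 j, qFactorial_succ q i] at ih₂
    rw [gaussBinom, show i + 1 + j - j = i + 1 by omega, add_right_comm i 1 j,
      qFactorial_succ q (i + j + 1), qFactorial_succ q i]
    rw [qFactorial_succ q j] at ih₁ ⊢
    linear_combination (1 - q * q ^ i) * ih₁ + q ^ (i + 1) * (1 - q * q ^ j) * ih₂

end GaussianBinomial

section JacobiTripleProduct

variable {z w q : ℝ}

lemma thetaTerm_neg_mul_prod (hq : q ≠ 0) (hzw : z * w = q) (N : ℕ) :
    thetaTerm z q (-N) * ∏ k ∈ range N, (1 + q ^ (-N : ℤ) * z * q ^ k) =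
      ∏ k ∈ range N, (1 + w * q ^ k) := by
  have hz : z ≠ 0 := left_ne_zero_of_mul (hzw ▸ hq)
  have hw : w ≠ 0 := right_ne_zero_of_mul (hzw ▸ hq)
  induction N with
  | zero => simp [thetaTerm, triangular]
  | succ N ih =>
    have hpow (k : ℕ) :
        q ^ (-(N + 1 : ℕ) : ℤ) * z * q ^ (k + 1) = q ^ (-N : ℤ) * z * q ^ k := by
      rw [Nat.cast_add_one, neg_add, zpow_add₀ hq, zpow_neg_one]
      field_simp
      ring
    have hstep : thetaTerm z q (-(N + 1 : ℕ)) = w * q ^ N * thetaTerm z q (-N) := by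
      rw [thetaTerm_neg hq hzw, thetaTerm_neg hq hzw, Nat.cast_add_one, thetaTerm_add_one hw hq,
        zpow_natCast, mul_comm w]
    have hback : thetaTerm z q (-N) =
        q ^ (-(N + 1 : ℕ) : ℤ) * z * thetaTerm z q (-(N + 1 : ℕ)) := by
      rw [← thetaTerm_add_one hz hq, Nat.cast_add_one, neg_add, neg_add_cancel_right]
    rw [prod_range_succ', prod_range_succ, ← ih]
    simp only [hpow]
    rw [pow_zero, mul_one]
    linear_combination (∏ k ∈ range N, (1 + q ^ (-N : ℤ) * z * q ^ k)) * (hstep - hback)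

lemma prod_one_add_mul_prod_one_add (hq : q ≠ 0) (hzw : z * w = q) (N : ℕ) :
    (∏ k ∈ range N, (1 + z * q ^ k)) * ∏ k ∈ range N, (1 + w * q ^ k) =
      ∑ j ∈ range (2 * N + 1), gaussBinom q (2 * N) j * thetaTerm z q (-N + j) := by
  have hz : z ≠ 0 := left_ne_zero_of_mul (hzw ▸ hq)
  have hupper : ∏ k ∈ range N, (1 + z * q ^ k) =
      ∏ k ∈ range N, (1 + q ^ (-N : ℤ) * z * q ^ (N + k)) :=
    prod_congr rfl fun k _ => by
      rw [zpow_neg, zpow_natCast, pow_add]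
      field_simp
  rw [← thetaTerm_neg_mul_prod hq hzw, hupper, mul_comm, mul_assoc, ← prod_range_add, ← two_mul,
    prod_one_add_mul_pow, mul_sum]
  refine sum_congr rfl fun j _ => ?_
  rw [thetaTerm_add hz hq, thetaTerm_natCast]
  ring

/-- The coefficient of the `n`-th term of the theta series in the finite triple product with
`2 * N` factors: the Gaussian binomial `[2N, N + n]_q`, extended by zero to `|n| > N`. -/
noncomputable def tripleProductCoeff (q : ℝ) (N : ℕ) (n : ℤ) : ℝ :=
  if n.natAbs ≤ N then gaussBinom q (2 * N) (N + n).toNat else 0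

lemma prod_mul_prod_eq_tsum (hq : q ≠ 0) (hzw : z * w = q) (N : ℕ) :
    (∏ k ∈ range N, (1 + z * q ^ k)) * ∏ k ∈ range N, (1 + w * q ^ k) =
      ∑' n : ℤ, tripleProductCoeff q N n * thetaTerm z q n := by
  rw [prod_one_add_mul_prod_one_add hq hzw, tsum_eq_sum (s := Icc (-N : ℤ) N) fun n hn => by
    rw [tripleProductCoeff, if_neg (by simp only [mem_Icc] at hn; omega), zero_mul]]
  refine sum_bij' (fun j _ => -N + j) (fun n _ => (N + n).toNat) ?_ ?_ ?_ ?_ ?_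
  · exact fun j hj => by simp only [mem_range, mem_Icc] at hj ⊢; omega
  · exact fun n hn => by simp only [mem_range, mem_Icc] at hn ⊢; omega
  · exact fun j _ => by simp
  · exact fun n hn => by simp only [mem_Icc] at hn; omega
  · intro j hj
    rw [mem_range] at hj
    rw [tripleProductCoeff, if_pos (by omega), add_neg_cancel_left, Int.toNat_natCast]

lemma qFactorial_pos (hq : q ∈ Set.Ioo (0 : ℝ) 1) (n : ℕ) : 0 < qFactorial q n :=
  prod_pos fun k _ => one_sub_mul_pow_pos hq.2 hq k

lemma antitone_qFactorial (hq : q ∈ Set.Ioo (0 : ℝ) 1) : Antitone (qFactorial q) := by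
  refine antitone_nat_of_succ_le fun n => ?_
  rw [qFactorial_succ]
  exact mul_le_of_le_one_right (qFactorial_pos hq n).le
    (sub_le_self _ (mul_pos hq.1 (pow_pos hq.1 n)).le)

lemma qPochInfR_self_le_qFactorial (hq : q ∈ Set.Ioo (0 : ℝ) 1) (n : ℕ) :
    qPochInfR q q ≤ qFactorial q n :=
  (antitone_qFactorial hq).le_of_tendsto (tendsto_prod_qPochInfR q hq) n

lemma tripleProductCoeff_eq_div (hq : q ∈ Set.Ioo (0 : ℝ) 1) {N : ℕ} {n : ℤ}
    (hn : n.natAbs ≤ N) : tripleProductCoeff q N n =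
      qFactorial q (2 * N) / (qFactorial q (N - n).toNat * qFactorial q (N + n).toNat) := by
  have hfactor := qFactorial_mul_qFactorial_mul_gaussBinom q (N - n).toNat (N + n).toNat
  rw [show (N - n).toNat + (N + n).toNat = 2 * N by omega] at hfactor
  rw [tripleProductCoeff, if_pos hn,
    eq_div_iff (mul_pos (qFactorial_pos hq _) (qFactorial_pos hq _)).ne', ← hfactor, mul_comm]

lemma norm_tripleProductCoeff_le (hq : q ∈ Set.Ioo (0 : ℝ) 1) (N : ℕ) (n : ℤ) :
    ‖tripleProductCoeff q N n‖ ≤ 1 / (qPochInfR q q * qPochInfR q q) := by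
  have hE := qPochInfR_self_pos hq
  by_cases hn : n.natAbs ≤ N
  · rw [tripleProductCoeff_eq_div hq hn, Real.norm_of_nonneg (div_nonneg (qFactorial_pos hq _).le
      (mul_pos (qFactorial_pos hq _) (qFactorial_pos hq _)).le)]
    refine div_le_div₀ zero_le_one ?_ (mul_pos hE hE)
      (mul_le_mul (qPochInfR_self_le_qFactorial hq _) (qPochInfR_self_le_qFactorial hq _) hE.le
        (qFactorial_pos hq _).le)
    simpa only [qFactorial, range_zero, prod_empty] using antitone_qFactorial hq (2 * N).zero_le
  · rw [tripleProductCoeff, if_neg hn, norm_zero]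
    positivity

lemma tendsto_tripleProductCoeff (hq : q ∈ Set.Ioo (0 : ℝ) 1) (n : ℤ) :
    Tendsto (fun N => tripleProductCoeff q N n) atTop (𝓝 (1 / qPochInfR q q)) := by
  have hE := (qPochInfR_self_pos hq).ne'
  have hfac : Tendsto (qFactorial q) atTop (𝓝 (qPochInfR q q)) := tendsto_prod_qPochInfR q hq
  have hlim {u : ℕ → ℕ} (hu : ∀ N, N ≤ u N + n.natAbs) :
      Tendsto (fun N => qFactorial q (u N)) atTop (𝓝 (qPochInfR q q)) :=
    hfac.comp (tendsto_atTop_mono (fun N => Nat.sub_le_iff_le_add.2 (hu N))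
      (tendsto_sub_atTop_nat n.natAbs))
  have hdiv := (hlim (u := fun N => 2 * N) fun N => by omega).div
    ((hlim (u := fun N => (N - n).toNat) fun N => by omega).mul
      (hlim (u := fun N => (N + n).toNat) fun N => by omega)) (mul_ne_zero hE hE)
  rw [div_mul_cancel_left₀ hE, ← one_div] at hdiv
  refine hdiv.congr' ?_
  filter_upwards [eventually_ge_atTop n.natAbs] with N hN
  exact (tripleProductCoeff_eq_div hq hN).symm

theorem theta_eq_jacobi_triple_product (hq : q ∈ Set.Ioo (0 : ℝ) 1) (hzw : z * w = q) :
    theta z q = qPochInfR (-z) q * qPochInfR (-w) q * qPochInfR q q := by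
  have hz : z ≠ 0 := left_ne_zero_of_mul (hzw ▸ hq.1.ne')
  have hprod := (tendsto_prod_qPochInfR (-z) hq).mul (tendsto_prod_qPochInfR (-w) hq)
  simp only [neg_mul, sub_neg_eq_add, prod_mul_prod_eq_tsum hq.1.ne' hzw] at hprod
  have hseries : Tendsto (fun N => ∑' n : ℤ, tripleProductCoeff q N n * thetaTerm z q n) atTop
      (𝓝 (∑' n : ℤ, 1 / qPochInfR q q * thetaTerm z q n)) := by
    refine tendsto_tsum_of_dominated_convergence
      ((summable_thetaTerm hz hq).norm.mul_left (1 / (qPochInfR q q * qPochInfR q q)))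
      (fun n => (tendsto_tripleProductCoeff hq n).mul_const _) (.of_forall fun N n => ?_)
    rw [norm_mul]
    exact mul_le_mul_of_nonneg_right (norm_tripleProductCoeff_le hq N n) (norm_nonneg _)
  rw [tendsto_nhds_unique hprod hseries, tsum_mul_left, theta]
  field_simp [(qPochInfR_self_pos hq).ne']

end JacobiTripleProduct

/-! ### Ramanujan's theta functions -/

section RamanujanTheta

/-- Ramanujan's theta function `φ(q) = ∑ q ^ n²`, the sum over all integers `n`. -/
noncomputable def ramanujanPhi (q : ℝ) : ℝ := theta q (q ^ 2)

/-- Ramanujan's theta function `ψ(q) = ∑ q ^ (n(n + 1)/2)`, the sum over all `n ≥ 0`; in the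
bilateral series `theta 1 q` each of its terms occurs twice. -/
noncomputable def ramanujanPsi (q : ℝ) : ℝ := theta 1 q / 2

variable {q : ℝ}

lemma theta_one (q : ℝ) : theta 1 q = 2 * ramanujanPsi q :=
  (mul_div_cancel₀ _ two_ne_zero).symm

lemma theta_self (hq : q ≠ 0) : theta q q = 2 * ramanujanPsi q := by
  rw [← theta_one, theta_eq_of_mul_eq hq (one_mul q)]

lemma ramanujanPhi_sq (hq : q ^ 2 ∈ Set.Ioo (0 : ℝ) 1) :
    ramanujanPhi q ^ 2 = ramanujanPhi (q ^ 2) ^ 2 + 4 * q * ramanujanPsi (q ^ 4) ^ 2 := by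
  have hq0 : q ≠ 0 := pow_ne_zero_iff two_ne_zero |>.1 hq.1.ne'
  have h := theta_mul_theta_eq_add hq0 hq0 hq
  rw [mul_div_cancel_right₀ _ hq0, mul_div_cancel_right₀ _ hq0, ← pow_two q, ← pow_mul,
    mul_assoc (q ^ 2), ← pow_two q, ← pow_add, theta_self (pow_ne_zero 4 hq0)] at h
  simp only [ramanujanPhi, ← pow_mul]
  linear_combination h

lemma ramanujanPsi_sq (hq : q ∈ Set.Ioo (0 : ℝ) 1) :
    ramanujanPsi q ^ 2 = ramanujanPhi q * ramanujanPsi (q ^ 2) := by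
  have h := theta_mul_theta_eq_add one_ne_zero one_ne_zero hq
  simp only [mul_one, div_one, one_mul, theta_one, theta_self (pow_ne_zero 2 hq.1.ne')] at h
  rw [ramanujanPhi]
  linear_combination h / 4

lemma ramanujanPhi_eq_add (hq : q ^ 2 ∈ Set.Ioo (0 : ℝ) 1) :
    ramanujanPhi q = ramanujanPhi (q ^ 4) + 2 * q * ramanujanPsi (q ^ 8) := by
  have hq0 : q ≠ 0 := pow_ne_zero_iff two_ne_zero |>.1 hq.1.ne'
  rw [ramanujanPhi, theta_bisection hq0 hq]
  simp only [← pow_mul, ← pow_add, theta_self (pow_ne_zero 8 hq0), ramanujanPhi, Nat.reduceMul,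
    Nat.reduceAdd]
  ring

lemma qPochInfR_mul_qPochInfR_sq (hq : q ∈ Set.Ioo (0 : ℝ) 1) :
    qPochInfR q (q ^ 2) * qPochInfR (q ^ 2) (q ^ 2) = qPochInfR q q := by
  simpa [prod_range_succ, ← pow_two] using (qPochInfR_eq_prod_pow q hq two_ne_zero).symm

lemma ramanujanPhi_neg_eq_qPochInfR (hq : q ∈ Set.Ioo (0 : ℝ) 1) :
    ramanujanPhi (-q) = qPochInfR q (q ^ 2) ^ 2 * qPochInfR (q ^ 2) (q ^ 2) := by
  rw [ramanujanPhi, neg_sq, theta_eq_jacobi_triple_product (w := -q) (pow_mem_Ioo hq two_ne_zero)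
    (by ring), neg_neg, ← pow_two]

lemma qPochInfR_mul_ramanujanPsi (hq : q ∈ Set.Ioo (0 : ℝ) 1) :
    qPochInfR q (q ^ 2) * ramanujanPsi q = qPochInfR (q ^ 2) (q ^ 2) := by
  have hsq := qPochInfR_mul_qPochInfR_neg q hq
  have hE := (qPochInfR_self_pos (pow_mem_Ioo hq two_ne_zero)).ne'
  rw [ramanujanPsi, theta_eq_jacobi_triple_product hq (one_mul q), qPochInfR_eq_one_sub_mul (-1) hq,
    neg_one_mul]
  rw [← qPochInfR_mul_qPochInfR_sq hq] at hsq ⊢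
  refine mul_right_cancel₀ hE ?_
  linear_combination (qPochInfR q (q ^ 2) * qPochInfR (q ^ 2) (q ^ 2) * qPochInfR (-q) q
    + qPochInfR (q ^ 2) (q ^ 2)) * hsq

lemma ramanujanPhi_neg_eq_ramanujanPsi (hq : q ∈ Set.Ioo (0 : ℝ) 1) :
    ramanujanPhi (-q) = ramanujanPsi q * qPochInfR q (q ^ 2) ^ 3 := by
  rw [ramanujanPhi_neg_eq_qPochInfR hq, ← qPochInfR_mul_ramanujanPsi hq]
  ring

lemma qPochInfR_self_sq_pos (hq : q ∈ Set.Ioo (0 : ℝ) 1) : 0 < qPochInfR q (q ^ 2) :=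
  qPochInfR_pos hq.2 (pow_mem_Ioo hq two_ne_zero)

lemma ramanujanPsi_pos (hq : q ∈ Set.Ioo (0 : ℝ) 1) : 0 < ramanujanPsi q := by
  refine pos_of_mul_pos_right ?_ (qPochInfR_self_sq_pos hq).le
  rw [qPochInfR_mul_ramanujanPsi hq]
  exact qPochInfR_self_pos (pow_mem_Ioo hq two_ne_zero)

lemma ramanujanPhi_neg_pos (hq : q ∈ Set.Ioo (0 : ℝ) 1) : 0 < ramanujanPhi (-q) := by
  rw [ramanujanPhi_neg_eq_ramanujanPsi hq]
  exact mul_pos (ramanujanPsi_pos hq) (pow_pos (qPochInfR_self_sq_pos hq) 3)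

end RamanujanTheta

/-! ### Theta identities of level ten -/

section LevelTen

variable {q : ℝ}

lemma ramanujanPsi_sq_sub (hq : q ∈ Set.Ioo (0 : ℝ) 1) :
    ramanujanPsi q ^ 2 - q * ramanujanPsi (q ^ 5) ^ 2 =
      theta q (q ^ 5) * theta (q ^ 2) (q ^ 5) := by
  have hq0 := hq.1.ne'
  have hpow (n : ℕ) : q ^ n ≠ 0 := pow_ne_zero n hq0
  have hsq := theta_sq_eq_add one_ne_zero hq
  simp only [mul_one, one_pow, one_mul, theta_one] at hsq
  have h3 : theta (q ^ 3) (q ^ 5) = theta (q ^ 2) (q ^ 5) :=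
    theta_eq_of_mul_eq (hpow 5) (by ring)
  have h4 : theta (q ^ 4) (q ^ 5) = theta q (q ^ 5) := theta_eq_of_mul_eq (hpow 5) (by ring)
  have h5 : theta (q ^ 5) (q ^ 5) = 2 * ramanujanPsi (q ^ 5) := theta_self (hpow 5)
  have h6 : q * theta (q ^ 6) (q ^ 5) = theta q (q ^ 5) :=
    mul_theta_of_eq_mul hq0 (hpow 5) (by ring)
  have h8 : q ^ 3 * theta (q ^ 8) (q ^ 5) = theta (q ^ 3) (q ^ 5) :=
    mul_theta_of_eq_mul (hpow 3) (hpow 5) (by ring)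
  have h10 : q ^ 5 * theta (q ^ 10) (q ^ 5) = theta (q ^ 5) (q ^ 5) :=
    mul_theta_of_eq_mul (hpow 5) (hpow 5) (by ring)
  rw [h3] at h8 hsq
  rw [h4] at hsq
  rw [h5] at h10 hsq
  linear_combination (hsq + theta (q ^ 2) (q ^ 5) * h6 + theta q (q ^ 5) * h8
    + 2 * q * ramanujanPsi (q ^ 5) * h10) / 4

lemma ramanujanPhi_neg_sq_sub (hq : q ∈ Set.Ioo (0 : ℝ) 1) :
    ramanujanPhi (-q) ^ 2 - ramanujanPhi (-q ^ 5) ^ 2 =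
      -4 * q * (theta (-q) (q ^ 10) * theta (-q ^ 3) (q ^ 10)) := by
  have hpow (n : ℕ) : -q ^ n ≠ 0 := neg_ne_zero.2 (pow_ne_zero n hq.1.ne')
  have hq0 : -q ≠ 0 := neg_ne_zero.2 hq.1.ne'
  have hbase : q ^ 10 ≠ 0 := pow_ne_zero 10 hq.1.ne'
  have hsq := theta_sq_eq_add hq0 (pow_mem_Ioo hq two_ne_zero)
  have hodd : (-q) ^ 3 = -q ^ 3 := Odd.neg_pow (by decide) q
  simp only [hodd, mul_neg, ← pow_mul, ← pow_add, ← pow_succ, Nat.reduceMul, Nat.reduceAdd] at hsq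
  have h7 : theta (-q ^ 7) (q ^ 10) = theta (-q ^ 3) (q ^ 10) :=
    theta_eq_of_mul_eq hbase (by ring)
  have h9 : theta (-q ^ 9) (q ^ 10) = theta (-q) (q ^ 10) := theta_eq_of_mul_eq hbase (by ring)
  have h11 : -q * theta (-q ^ 11) (q ^ 10) = theta (-q) (q ^ 10) :=
    mul_theta_of_eq_mul hq0 hbase (by ring)
  have h13 : -q ^ 3 * theta (-q ^ 13) (q ^ 10) = theta (-q ^ 3) (q ^ 10) :=
    mul_theta_of_eq_mul (hpow 3) hbase (by ring)
  have h17 : -q ^ 7 * theta (-q ^ 17) (q ^ 10) = theta (-q ^ 7) (q ^ 10) :=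
    mul_theta_of_eq_mul (hpow 7) hbase (by ring)
  have h21 : -q ^ 11 * theta (-q ^ 21) (q ^ 10) = theta (-q ^ 11) (q ^ 10) :=
    mul_theta_of_eq_mul (hpow 11) hbase (by ring)
  rw [h7] at h17 hsq
  rw [h9] at hsq
  rw [ramanujanPhi, ramanujanPhi, neg_sq, neg_sq, ← pow_mul]
  linear_combination hsq - 2 * q * theta (-q) (q ^ 10) * h13
    + (q ^ 4 * theta (-q ^ 13) (q ^ 10) - q * theta (-q ^ 3) (q ^ 10)) * h11
    + q ^ 2 * theta (-q ^ 11) (q ^ 10) * h17 - q ^ 5 * theta (-q ^ 13) (q ^ 10) * h21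

lemma theta_mul_theta_add_theta_mul_theta (hq : q ∈ Set.Ioo (0 : ℝ) 1) {s : ℝ}
    (hs : s ^ 2 = 1) :
    theta (-q ^ 3) (q ^ 10) * theta (-q ^ 4) (q ^ 10) +
        s * q * (theta (-q) (q ^ 10) * theta (-q ^ 2) (q ^ 10)) =
      theta (s * q) (q ^ 5) * theta (-s * q ^ 2) (q ^ 5) := by
  have hq0 := hq.1.ne'
  have hpow (n : ℕ) : -q ^ n ≠ 0 := neg_ne_zero.2 (pow_ne_zero n hq0)
  have hs0 : s ≠ 0 := fun h => by norm_num [h] at hs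
  have h5 := pow_mem_Ioo hq (n := 5) (by decide)
  have h10 := pow_mem_Ioo hq (n := 10) (by decide)
  have hleft : theta (-q ^ 3) (q ^ 10) * theta (-q ^ 4) (q ^ 10) =
      theta (q ^ 9) (q ^ 20) * theta (q ^ 7) (q ^ 20) -
        q ^ 3 * (theta (q ^ 19) (q ^ 20) * theta (q ^ 17) (q ^ 20)) := by
    rw [theta_mul_theta_eq_add (hpow 3) (hpow 4) h10]
    field_simp
    ring_nf
  have hright : theta (-q) (q ^ 10) * theta (-q ^ 2) (q ^ 10) =
      theta (q ^ 9) (q ^ 20) * theta (q ^ 3) (q ^ 20) -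
        q * (theta (q ^ 19) (q ^ 20) * theta (q ^ 13) (q ^ 20)) := by
    rw [theta_mul_theta_eq_add (neg_ne_zero.2 hq0) (hpow 2) h10]
    field_simp
    ring_nf
  have hfirst : theta (s * q) (q ^ 5) =
      theta (q ^ 7) (q ^ 20) + s * q * theta (q ^ 17) (q ^ 20) := by
    rw [theta_bisection (mul_ne_zero hs0 hq0) h5, mul_pow, hs]
    ring_nf
  have hsecond : theta (-s * q ^ 2) (q ^ 5) =
      theta (q ^ 9) (q ^ 20) - s * q ^ 2 * theta (q ^ 19) (q ^ 20) := by
    rw [theta_bisection (mul_ne_zero (neg_ne_zero.2 hs0) (pow_ne_zero 2 hq0)) h5, mul_pow, neg_sq,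
      hs]
    ring_nf
  have h13 : theta (q ^ 13) (q ^ 20) = theta (q ^ 7) (q ^ 20) :=
    theta_eq_of_mul_eq (pow_ne_zero 20 hq0) (by ring)
  have h17 : theta (q ^ 17) (q ^ 20) = theta (q ^ 3) (q ^ 20) :=
    theta_eq_of_mul_eq (pow_ne_zero 20 hq0) (by ring)
  rw [hleft, hright, hfirst, hsecond, h13, h17]
  linear_combination (q ^ 3 * theta (q ^ 3) (q ^ 20) * theta (q ^ 19) (q ^ 20)) * hs

end LevelTen

/-! ### Products over residue classes and the parameter `k` -/

section ResidueClasses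

/-- The product `(qⁱ; qᵐ)∞ (qᵐ⁻ⁱ; qᵐ)∞` of `1 - qⁿ` over the positive integers `n ≡ ± i` modulo
`m`, meant for `0 < i < m`. -/
noncomputable def qPochPair (q : ℝ) (m i : ℕ) : ℝ :=
  qPochInfR (q ^ i) (q ^ m) * qPochInfR (q ^ (m - i)) (q ^ m)

variable {q : ℝ} {m i : ℕ}

lemma qPochPair_pos (hq : q ∈ Set.Ioo (0 : ℝ) 1) (hi : 0 < i) (him : i < m) :
    0 < qPochPair q m i := by
  have hqm := pow_mem_Ioo hq (hi.trans him).ne'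
  exact mul_pos (qPochInfR_pos (pow_mem_Ioo hq hi.ne').2 hqm)
    (qPochInfR_pos (pow_mem_Ioo hq (Nat.sub_pos_of_lt him).ne').2 hqm)

lemma qPochPair_sq (q : ℝ) (m i : ℕ) : qPochPair (q ^ 2) m i = qPochPair q (2 * m) (2 * i) := by
  rw [qPochPair, qPochPair, ← pow_mul, ← pow_mul, ← pow_mul, Nat.mul_sub]

lemma qPochPair_eq_mul (hq : q ∈ Set.Ioo (0 : ℝ) 1) (hm : m ≠ 0) (him : i ≤ m) :
    qPochPair q m i = qPochPair q (2 * m) i * qPochPair q (2 * m) (m - i) := by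
  have hsplit (j : ℕ) : qPochInfR (q ^ j) (q ^ m) =
      qPochInfR (q ^ j) (q ^ (2 * m)) * qPochInfR (q ^ (j + m)) (q ^ (2 * m)) := by
    simpa [prod_range_succ, ← pow_mul, ← pow_add, mul_comm m] using
      qPochInfR_eq_prod_pow (q ^ j) (pow_mem_Ioo hq hm) two_ne_zero
  rw [qPochPair, hsplit, hsplit, qPochPair, qPochPair, show 2 * m - (m - i) = i + m by lia,
    show m - i + m = 2 * m - i by lia]
  ring

lemma theta_neg_pow (hq : q ∈ Set.Ioo (0 : ℝ) 1) (hm : m ≠ 0) (him : i ≤ m) :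
    theta (-q ^ i) (q ^ m) = qPochPair q m i * qPochInfR (q ^ m) (q ^ m) := by
  rw [theta_eq_jacobi_triple_product (w := -q ^ (m - i)) (pow_mem_Ioo hq hm)
    (by rw [neg_mul_neg, ← pow_add, Nat.add_sub_cancel' him]), neg_neg, neg_neg, qPochPair]

lemma theta_neg_self_pow (hq : q ∈ Set.Ioo (0 : ℝ) 1) (hm : m ≠ 0) :
    theta (-q) (q ^ m) = qPochPair q m 1 * qPochInfR (q ^ m) (q ^ m) := by
  simpa only [pow_one] using theta_neg_pow hq hm (Nat.one_le_iff_ne_zero.2 hm)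

lemma theta_pow_mul_theta_neg_pow (hq : q ∈ Set.Ioo (0 : ℝ) 1) (hm : m ≠ 0) (him : i ≤ m) :
    theta (q ^ i) (q ^ m) * theta (-q ^ i) (q ^ m) =
      qPochPair q (2 * m) (2 * i) * qPochInfR (q ^ m) (q ^ m) ^ 2 := by
  have hqm := pow_mem_Ioo hq hm
  rw [theta_neg_pow hq hm him, theta_eq_jacobi_triple_product (w := q ^ (m - i)) hqm
    (by rw [← pow_add, Nat.add_sub_cancel' him]), ← qPochPair_sq, qPochPair, qPochPair,
    pow_right_comm q 2 i, pow_right_comm q 2 (m - i), pow_right_comm q 2 m,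
    ← qPochInfR_mul_qPochInfR_neg _ hqm, ← qPochInfR_mul_qPochInfR_neg _ hqm]
  ring

lemma qPochInfR_pow_five_pos (hq : q ∈ Set.Ioo (0 : ℝ) 1) : 0 < qPochInfR (q ^ 5) (q ^ 10) :=
  qPochInfR_pos (pow_mem_Ioo hq (by decide)).2 (pow_mem_Ioo hq (by decide))

lemma qPochInfR_self_sq_eq_mul (hq : q ∈ Set.Ioo (0 : ℝ) 1) :
    qPochInfR q (q ^ 2) =
      qPochPair q 10 1 * qPochPair q 10 3 * qPochInfR (q ^ 5) (q ^ 10) := by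
  rw [qPochInfR_eq_prod_pow q (pow_mem_Ioo hq two_ne_zero) (m := 5) (by decide), qPochPair,
    qPochPair]
  simp only [prod_range_succ, prod_range_zero, ← pow_mul, ← pow_succ']
  norm_num
  ring

end ResidueClasses

section RogersRamanujan

/-- Ramanujan's parameter `k = R(q) R(q²)²`. -/
noncomputable def ramanujanK (q : ℝ) : ℝ := Rq q * Rq (q ^ 2) ^ 2

variable {q : ℝ}

lemma Rq_eq_qPochPair_div (q : ℝ) :
    Rq q = q ^ ((1 : ℝ) / 5) * (qPochPair q 5 1 / qPochPair q 5 2) := by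
  rw [Rq, qPochPair, qPochPair, pow_one, mul_assoc, mul_div_assoc]

lemma Rq_eq (hq : q ∈ Set.Ioo (0 : ℝ) 1) :
    Rq q = q ^ ((1 : ℝ) / 5) *
      (qPochPair q 10 1 * qPochPair q 10 4 / (qPochPair q 10 2 * qPochPair q 10 3)) := by
  rw [Rq_eq_qPochPair_div, qPochPair_eq_mul hq (by decide) (by decide : 1 ≤ 5),
    qPochPair_eq_mul hq (by decide) (by decide : 2 ≤ 5)]

lemma qPochPair_ten_pos (hq : q ∈ Set.Ioo (0 : ℝ) 1) : 0 < qPochPair q 10 1 ∧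
    0 < qPochPair q 10 2 ∧ 0 < qPochPair q 10 3 ∧ 0 < qPochPair q 10 4 := by
  refine ⟨?_, ?_, ?_, ?_⟩ <;> exact qPochPair_pos hq (by decide) (by decide)

lemma ramanujanK_eq (hq : q ∈ Set.Ioo (0 : ℝ) 1) :
    ramanujanK q =
      q * (qPochPair q 10 1 * qPochPair q 10 2) / (qPochPair q 10 3 * qPochPair q 10 4) := by
  have hroot : q ^ ((1 : ℝ) / 5) * ((q ^ 2) ^ ((1 : ℝ) / 5)) ^ 2 = q := by
    rw [← Real.rpow_natCast_mul hq.1.le, ← Real.rpow_mul_natCast hq.1.le, ← Real.rpow_add hq.1]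
    norm_num
  have h₂ := (qPochPair_pos hq (by decide) (by decide : 2 < 10)).ne'
  have h₄ := (qPochPair_pos hq (by decide) (by decide : 4 < 10)).ne'
  rw [ramanujanK, Rq_eq hq, Rq_eq_qPochPair_div (q ^ 2), qPochPair_sq, qPochPair_sq]
  simp only [Nat.reduceMul]
  rw [mul_pow, mul_mul_mul_comm, hroot]
  field_simp

lemma ramanujanK_mul (hq : q ∈ Set.Ioo (0 : ℝ) 1) :
    ramanujanK q * (qPochPair q 10 3 * qPochPair q 10 4) =
      q * (qPochPair q 10 1 * qPochPair q 10 2) := by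
  have h₃ := qPochPair_pos hq (by decide) (by decide : 3 < 10)
  have h₄ := qPochPair_pos hq (by decide) (by decide : 4 < 10)
  rw [ramanujanK_eq hq, div_mul_cancel₀ _ (mul_pos h₃ h₄).ne']

lemma ramanujanK_pos (hq : q ∈ Set.Ioo (0 : ℝ) 1) : 0 < ramanujanK q := by
  obtain ⟨h₁, h₂, h₃, h₄⟩ := qPochPair_ten_pos hq
  rw [ramanujanK_eq hq]
  exact div_pos (mul_pos hq.1 (mul_pos h₁ h₂)) (mul_pos h₃ h₄)

lemma theta_pow_mul_qPochPair (hq : q ∈ Set.Ioo (0 : ℝ) 1) {i : ℕ} (hi : i ≤ 5) :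
    theta (q ^ i) (q ^ 5) * (qPochPair q 10 i * qPochPair q 10 (5 - i)) =
      qPochPair q 10 (2 * i) * qPochInfR (q ^ 5) (q ^ 5) := by
  have hE := qPochInfR_self_pos (pow_mem_Ioo hq (by decide : 5 ≠ 0))
  have h := theta_pow_mul_theta_neg_pow hq (by decide) hi
  rw [theta_neg_pow hq (by decide) hi, qPochPair_eq_mul hq (by decide) hi] at h
  refine mul_right_cancel₀ hE.ne' ?_
  linear_combination h

lemma qPochInfR_pow_five_self (hq : q ∈ Set.Ioo (0 : ℝ) 1) :
    qPochInfR (q ^ 5) (q ^ 5) = qPochInfR (q ^ 5) (q ^ 10) * qPochInfR (q ^ 10) (q ^ 10) := by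
  rw [← qPochInfR_mul_qPochInfR_sq (pow_mem_Ioo hq (by decide)), ← pow_mul]

lemma one_add_ramanujanK_mul (hq : q ∈ Set.Ioo (0 : ℝ) 1) :
    (1 + ramanujanK q) * (qPochPair q 10 1 * qPochPair q 10 4 ^ 2) =
      qPochPair q 10 2 ^ 2 * qPochInfR (q ^ 5) (q ^ 10) ^ 2 := by
  have hE := qPochInfR_self_pos (pow_mem_Ioo hq (by decide : 10 ≠ 0))
  have h₃ := qPochPair_pos hq (by decide) (by decide : 3 < 10)
  have hθ := theta_mul_theta_add_theta_mul_theta hq (one_pow 2)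
  have hθ₁ := theta_pow_mul_qPochPair hq (by decide : 1 ≤ 5)
  rw [one_mul, neg_one_mul, theta_neg_pow hq (by decide) (by decide : 3 ≤ 10),
    theta_neg_pow hq (by decide) (by decide : 4 ≤ 10),
    theta_neg_pow hq (by decide) (by decide : 2 ≤ 10), theta_neg_self_pow hq (by decide),
    theta_neg_pow hq (by decide) (by decide : 2 ≤ 5),
    qPochPair_eq_mul hq (by decide) (by decide : 2 ≤ 5), qPochInfR_pow_five_self hq] at hθ
  rw [pow_one, qPochInfR_pow_five_self hq] at hθ₁
  refine mul_right_cancel₀ (mul_pos h₃ (pow_pos hE 2)).ne' ?_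
  linear_combination (qPochPair q 10 1 * qPochPair q 10 4) * hθ +
    (qPochPair q 10 1 * qPochPair q 10 4 * qPochInfR (q ^ 10) (q ^ 10) ^ 2) * ramanujanK_mul hq +
    (qPochPair q 10 2 * qPochPair q 10 3 * qPochInfR (q ^ 5) (q ^ 10) *
      qPochInfR (q ^ 10) (q ^ 10)) * hθ₁

lemma one_sub_ramanujanK_mul (hq : q ∈ Set.Ioo (0 : ℝ) 1) :
    (1 - ramanujanK q) * (qPochPair q 10 2 * qPochPair q 10 3 ^ 2) =
      qPochPair q 10 1 * qPochPair q 10 4 * qPochInfR (q ^ 5) (q ^ 10) ^ 2 := by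
  have hE := qPochInfR_self_pos (pow_mem_Ioo hq (by decide : 10 ≠ 0))
  have h₄ := qPochPair_pos hq (by decide) (by decide : 4 < 10)
  have hθ := theta_mul_theta_add_theta_mul_theta hq (by norm_num : (-1 : ℝ) ^ 2 = 1)
  have hθ₂ := theta_pow_mul_qPochPair hq (by decide : 2 ≤ 5)
  rw [neg_neg, one_mul, neg_one_mul, theta_neg_pow hq (by decide) (by decide : 3 ≤ 10),
    theta_neg_pow hq (by decide) (by decide : 4 ≤ 10),
    theta_neg_pow hq (by decide) (by decide : 2 ≤ 10), theta_neg_self_pow hq (by decide),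
    theta_neg_self_pow hq (by decide),
    qPochPair_eq_mul hq (by decide) (by decide : 1 ≤ 5), qPochInfR_pow_five_self hq] at hθ
  rw [qPochInfR_pow_five_self hq] at hθ₂
  refine mul_right_cancel₀ (mul_pos h₄ (pow_pos hE 2)).ne' ?_
  linear_combination (qPochPair q 10 2 * qPochPair q 10 3) * hθ -
    (qPochPair q 10 2 * qPochPair q 10 3 * qPochInfR (q ^ 10) (q ^ 10) ^ 2) * ramanujanK_mul hq +
    (qPochPair q 10 1 * qPochPair q 10 4 * qPochInfR (q ^ 5) (q ^ 10) *
      qPochInfR (q ^ 10) (q ^ 10)) * hθ₂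

lemma ramanujanK_lt_one (hq : q ∈ Set.Ioo (0 : ℝ) 1) : ramanujanK q < 1 := by
  obtain ⟨h₁, h₂, h₃, h₄⟩ := qPochPair_ten_pos hq
  have hχ := qPochInfR_pow_five_pos hq
  refine sub_pos.1 (pos_of_mul_pos_left ?_ (mul_pos h₂ (pow_pos h₃ 2)).le)
  rw [one_sub_ramanujanK_mul hq]
  positivity

theorem Rq_pow_five_eq (hq : q ∈ Set.Ioo (0 : ℝ) 1) :
    Rq q ^ 5 = ramanujanK q * (1 - ramanujanK q) ^ 2 / (1 + ramanujanK q) ^ 2 := by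
  obtain ⟨h₁, h₂, h₃, h₄⟩ := qPochPair_ten_pos hq
  have hχ := qPochInfR_pow_five_pos hq
  have hroot : (q ^ ((1 : ℝ) / 5)) ^ 5 = q := by
    rw [← Real.rpow_mul_natCast hq.1.le]
    norm_num
  rw [eq_div_of_mul_eq (by positivity) (one_add_ramanujanK_mul hq),
    eq_div_of_mul_eq (by positivity) (one_sub_ramanujanK_mul hq), ramanujanK_eq hq, Rq_eq hq,
    mul_pow, hroot]
  field_simp

lemma mul_one_sub_ramanujanK_sq_mul (hq : q ∈ Set.Ioo (0 : ℝ) 1) :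
    q * (1 - ramanujanK q ^ 2) * (qPochPair q 10 1 * qPochPair q 10 3) =
      ramanujanK q * qPochInfR (q ^ 5) (q ^ 10) ^ 4 := by
  obtain ⟨h₁, h₂, h₃, h₄⟩ := qPochPair_ten_pos hq
  rw [← one_pow 2, sq_sub_sq, eq_div_of_mul_eq (by positivity) (one_add_ramanujanK_mul hq),
    eq_div_of_mul_eq (by positivity) (one_sub_ramanujanK_mul hq), ramanujanK_eq hq]
  field_simp

lemma mul_one_sub_ramanujanK_sq_mul_qPochInfR (hq : q ∈ Set.Ioo (0 : ℝ) 1) :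
    q * (1 - ramanujanK q ^ 2) * qPochInfR q (q ^ 2) =
      ramanujanK q * qPochInfR (q ^ 5) (q ^ 10) ^ 5 := by
  rw [qPochInfR_self_sq_eq_mul hq]
  linear_combination qPochInfR (q ^ 5) (q ^ 10) * mul_one_sub_ramanujanK_sq_mul hq

lemma ramanujanK_mul_ramanujanPsi_sq (hq : q ∈ Set.Ioo (0 : ℝ) 1) :
    ramanujanK q * ramanujanPsi q ^ 2 =
      q * (1 + ramanujanK q - ramanujanK q ^ 2) * ramanujanPsi (q ^ 5) ^ 2 := by
  obtain ⟨h₁, h₂, h₃, h₄⟩ := qPochPair_ten_pos hq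
  have hψ : qPochInfR (q ^ 5) (q ^ 10) * ramanujanPsi (q ^ 5) = qPochInfR (q ^ 10) (q ^ 10) := by
    simpa only [← pow_mul, Nat.reduceMul] using
      qPochInfR_mul_ramanujanPsi (pow_mem_Ioo hq (by decide : 5 ≠ 0))
  have hθ₁ := theta_pow_mul_qPochPair hq (by decide : 1 ≤ 5)
  have hθ₂ := theta_pow_mul_qPochPair hq (by decide : 2 ≤ 5)
  rw [pow_one, qPochInfR_pow_five_self hq, ← hψ] at hθ₁
  rw [qPochInfR_pow_five_self hq, ← hψ] at hθ₂
  have hsub := ramanujanPsi_sq_sub hq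
  rw [eq_div_of_mul_eq (by positivity) hθ₁, eq_div_of_mul_eq (by positivity) hθ₂] at hsub
  have hk := mul_one_sub_ramanujanK_sq_mul hq
  field_simp at hsub
  refine mul_right_cancel₀ (mul_pos h₁ h₃).ne' ?_
  linear_combination ramanujanK q * hsub - ramanujanPsi (q ^ 5) ^ 2 * hk

lemma one_sub_ramanujanK_sq_mul_ramanujanPhi_neg_sq (hq : q ∈ Set.Ioo (0 : ℝ) 1) :
    (1 - ramanujanK q ^ 2) * ramanujanPhi (-q) ^ 2 =
      (1 - 4 * ramanujanK q - ramanujanK q ^ 2) * ramanujanPhi (-q ^ 5) ^ 2 := by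
  have hφ : ramanujanPhi (-q ^ 5) =
      qPochInfR (q ^ 5) (q ^ 10) ^ 2 * qPochInfR (q ^ 10) (q ^ 10) := by
    simpa only [← pow_mul, Nat.reduceMul] using
      ramanujanPhi_neg_eq_qPochInfR (pow_mem_Ioo hq (by decide : 5 ≠ 0))
  have hsub := ramanujanPhi_neg_sq_sub hq
  rw [theta_neg_self_pow hq (by decide), theta_neg_pow hq (by decide) (by decide : 3 ≤ 10)] at hsub
  rw [hφ] at hsub ⊢
  linear_combination (1 - ramanujanK q ^ 2) * hsub -
    4 * qPochInfR (q ^ 10) (q ^ 10) ^ 2 * mul_one_sub_ramanujanK_sq_mul hq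

end RogersRamanujan

/-! ### The hypergeometric equation and a quadratic transformation -/

section PowerSeries

variable {c : ℕ → ℝ} {r x : ℝ}

lemma summable_succ_mul_pow (hc : Summable fun n => c n * r ^ n) (hx : |x| < r) :
    Summable fun n : ℕ => (n + 1) * c (n + 1) * x ^ n := by
  have hr : 0 < r := (abs_nonneg x).trans_lt hx
  have hratio : ‖x / r‖ < 1 := by
    rwa [norm_div, Real.norm_eq_abs, Real.norm_of_nonneg hr.le, div_lt_one hr]
  have hbdd : (fun n => c (n + 1) * r ^ (n + 1)) =O[atTop] fun _ => (1 : ℝ) :=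
    ((summable_nat_add_iff 1).2 hc).tendsto_atTop_zero.isBigO_one ℝ
  have hgeom : Summable fun n : ℕ => r⁻¹ * ((n + 1) * (x / r) ^ n) := by
    refine Summable.mul_left _ ?_
    simpa [add_mul] using (summable_pow_mul_geometric_of_norm_lt_one 1 hratio).add
      (summable_geometric_of_norm_lt_one hratio)
  refine summable_of_isBigO_nat hgeom.norm
    ((hbdd.mul (Asymptotics.isBigO_refl _ _)).norm_right.congr (fun n => ?_) fun n => by
      rw [one_mul])
  rw [div_pow, pow_succ]
  field_simp

lemma hasDerivAt_tsum_mul_pow (hc : Summable fun n => c n * r ^ n) (hx : |x| < r) :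
    HasDerivAt (fun y => ∑' n, c n * y ^ n) (∑' n : ℕ, (n + 1) * c (n + 1) * x ^ n) x := by
  obtain ⟨s, hxs, hsr⟩ := exists_between hx
  have hs : |s| = s := abs_of_pos ((abs_nonneg x).trans_lt hxs)
  have hu : Summable fun n : ℕ => ‖c n * (n * s ^ (n - 1))‖ := by
    refine (summable_nat_add_iff 1).1 ((summable_succ_mul_pow hc (hs.trans_lt hsr)).norm.congr ?_)
    intro n
    rw [Nat.cast_add_one, Nat.add_sub_cancel, ← mul_assoc, mul_comm (c (n + 1))]
  have hbound (n : ℕ) (y : ℝ) (hy : y ∈ Set.Ioo (-s) s) :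
      ‖c n * (n * y ^ (n - 1))‖ ≤ ‖c n * (n * s ^ (n - 1))‖ := by
    have : |y| ≤ |s| := (abs_lt.2 hy).le.trans (le_abs_self s)
    simp only [norm_mul, norm_pow, Real.norm_eq_abs]
    gcongr
  have hzero : |(0 : ℝ)| < s := by simpa using (abs_nonneg x).trans_lt hxs
  refine (hasDerivAt_tsum_of_isPreconnected hu isOpen_Ioo isPreconnected_Ioo
    (fun n y _ => (hasDerivAt_pow n y).const_mul (c n)) hbound (abs_lt.1 hzero)
    (summable_of_ne_finset_zero (s := {0}) fun n hn => by simp_all)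
    (abs_lt.1 hxs)).congr_deriv ?_
  have hshift (n : ℕ) : c (n + 1) * ((n + 1 : ℕ) * x ^ (n + 1 - 1)) =
      (n + 1) * c (n + 1) * x ^ n := by
    rw [Nat.cast_add_one, Nat.add_sub_cancel, ← mul_assoc, mul_comm (c (n + 1))]
  rw [tsum_eq_zero_add' ((summable_succ_mul_pow hc hx).congr fun n => (hshift n).symm),
    tsum_congr hshift]
  simp

end PowerSeries

section Hypergeometric

variable {a b x : ℝ}

/-- The `n`-th Taylor coefficient of `₂F₁(a, b; 1; ·)` at `0`. -/
noncomputable def hyp2F1Coeff (a b : ℝ) (n : ℕ) : ℝ :=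
  risingFact a n * risingFact b n / (risingFact 1 n * n.factorial)

lemma risingFact_succ (a : ℝ) (n : ℕ) : risingFact a (n + 1) = risingFact a n * (a + n) :=
  prod_range_succ _ n

lemma risingFact_one_pos (n : ℕ) : 0 < risingFact 1 n :=
  prod_pos fun _ _ => by positivity

lemma hyp2F1Coeff_zero (a b : ℝ) : hyp2F1Coeff a b 0 = 1 := by
  simp [hyp2F1Coeff, risingFact]

lemma hyp2F1Coeff_succ (a b : ℝ) (n : ℕ) :
    (n + 1) ^ 2 * hyp2F1Coeff a b (n + 1) = (a + n) * (b + n) * hyp2F1Coeff a b n := by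
  have hrising := (risingFact_one_pos n).ne'
  rw [hyp2F1Coeff, hyp2F1Coeff, risingFact_succ, risingFact_succ, risingFact_succ,
    Nat.factorial_succ, Nat.cast_mul, Nat.cast_add_one, add_comm (1 : ℝ)]
  field_simp

lemma hyp2F1_zero (a b c : ℝ) : hyp2F1 a b c 0 = 1 := by
  rw [hyp2F1, tsum_eq_single 0 fun n hn => by simp [hn]]
  simp [risingFact]

section SumOne

variable (ha : 0 ≤ a) (hb : 0 ≤ b) (hab : a + b = 1)
include ha hb hab

lemma hyp2F1Coeff_mem_Icc (n : ℕ) : hyp2F1Coeff a b n ∈ Set.Icc (0 : ℝ) 1 := by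
  induction n with
  | zero => simp [hyp2F1Coeff_zero]
  | succ n ih =>
    have hn : (0 : ℝ) < (n + 1) ^ 2 := by positivity
    rw [← mul_div_cancel_left₀ (hyp2F1Coeff a b (n + 1)) hn.ne', hyp2F1Coeff_succ, Set.mem_Icc,
      div_le_one hn]
    have hfactor : (a + n) * (b + n) ≤ (n + 1 : ℝ) ^ 2 := by nlinarith
    have := ih.1
    exact ⟨by positivity, (mul_le_of_le_one_right (by positivity) ih.2).trans hfactor⟩

lemma summable_hyp2F1Coeff_mul_pow (hx : |x| < 1) :
    Summable fun n => hyp2F1Coeff a b n * x ^ n := by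
  refine Summable.of_norm_bounded (summable_geometric_of_abs_lt_one hx).norm fun n => ?_
  have := hyp2F1Coeff_mem_Icc ha hb hab n
  rw [norm_mul, Real.norm_of_nonneg this.1]
  exact mul_le_of_le_one_left (norm_nonneg _) this.2

lemma one_le_hyp2F1 (hx : x ∈ Set.Ico (0 : ℝ) 1) : 1 ≤ hyp2F1 a b 1 x := by
  have hsum := summable_hyp2F1Coeff_mul_pow ha hb hab (by rw [abs_of_nonneg hx.1]; exact hx.2)
  refine le_of_eq_of_le ?_ <| hsum.le_tsum 0 fun n _ =>
    mul_nonneg (hyp2F1Coeff_mem_Icc ha hb hab n).1 (pow_nonneg hx.1 n)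
  rw [hyp2F1Coeff_zero, pow_zero, one_mul]

lemma hasDerivAt_hyp2F1 (hx : |x| < 1) :
    HasDerivAt (hyp2F1 a b 1) (∑' n : ℕ, (n + 1) * hyp2F1Coeff a b (n + 1) * x ^ n) x := by
  obtain ⟨r, hxr, hr⟩ := exists_between hx
  exact hasDerivAt_tsum_mul_pow (summable_hyp2F1Coeff_mul_pow ha hb hab
    (by rwa [abs_of_nonneg ((abs_nonneg x).trans hxr.le)])) hxr

-- The coefficient at `n = 0` vanishes because `x / 0 = 0`.
lemma mul_deriv_hyp2F1_eq_tsum (hx : |x| < 1) :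
    x * (1 - x) * deriv (hyp2F1 a b 1) x =
      ∑' n : ℕ, a * b * hyp2F1Coeff a b (n - 1) / n * x ^ n := by
  obtain ⟨r, hxr, hr⟩ := exists_between hx
  set D := ∑' n : ℕ, (n + 1) * hyp2F1Coeff a b (n + 1) * x ^ n with hD
  have hsum : HasSum (fun n : ℕ => (n + 1) * hyp2F1Coeff a b (n + 1) * x ^ n) D :=
    (summable_succ_mul_pow (summable_hyp2F1Coeff_mul_pow ha hb hab
      (by rwa [abs_of_nonneg ((abs_nonneg x).trans hxr.le)])) hxr).hasSum
  have hshift : HasSum (fun n : ℕ => n * hyp2F1Coeff a b n * x ^ n) (x * D) := by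
    rw [← hasSum_nat_add_iff' 1]
    simpa [pow_succ', mul_left_comm, mul_assoc] using hsum.mul_left x
  have hcoeff (n : ℕ) : x * ((n + 1) * hyp2F1Coeff a b (n + 1) * x ^ n -
      n * hyp2F1Coeff a b n * x ^ n) =
      a * b * hyp2F1Coeff a b (n + 1 - 1) / (n + 1 : ℕ) * x ^ (n + 1) := by
    have := hyp2F1Coeff_succ a b n
    rw [Nat.add_sub_cancel]
    push_cast
    field_simp
    linear_combination x ^ (n + 1) * this + x ^ (n + 1) * n * hyp2F1Coeff a b n * hab
  rw [(hasDerivAt_hyp2F1 ha hb hab hx).deriv, ← hD, mul_assoc, one_sub_mul]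
  refine HasSum.tsum_eq ?_ |>.symm
  rw [← hasSum_nat_add_iff' 1]
  simpa [hcoeff] using (hsum.sub hshift).mul_left x

lemma hasDerivAt_mul_deriv_hyp2F1 (hx : |x| < 1) :
    HasDerivAt (fun y => y * (1 - y) * deriv (hyp2F1 a b 1) y) (a * b * hyp2F1 a b 1 x) x := by
  obtain ⟨r, hxr, hr⟩ := exists_between hx
  have hr0 : 0 < r := (abs_nonneg x).trans_lt hxr
  have hsum : Summable fun n : ℕ => a * b * hyp2F1Coeff a b (n - 1) / n * r ^ n := by
    rw [← summable_nat_add_iff 1]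
    refine Summable.of_norm_bounded (summable_geometric_of_lt_one hr0.le hr) fun n => ?_
    have hcoeff := hyp2F1Coeff_mem_Icc ha hb hab n
    have hprod : a * b * hyp2F1Coeff a b n ≤ 1 :=
      mul_le_one₀ (by nlinarith) hcoeff.1 hcoeff.2
    have hdiv : a * b * hyp2F1Coeff a b n / (n + 1 : ℕ) ≤ 1 :=
      div_le_one_of_le₀ (hprod.trans (by simp)) (by positivity)
    have := hcoeff.1
    rw [Nat.add_sub_cancel, Real.norm_of_nonneg (by positivity), pow_succ, mul_left_comm]
    exact mul_le_of_le_one_right (by positivity) (mul_le_one₀ hdiv hr0.le hr.le)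
  refine ((hasDerivAt_tsum_mul_pow hsum hxr).congr_deriv ?_).congr_of_eventuallyEq ?_
  · rw [hyp2F1, ← tsum_mul_left]
    refine tsum_congr fun n => ?_
    rw [Nat.add_sub_cancel, Nat.cast_add_one, hyp2F1Coeff]
    field_simp
  · filter_upwards [(isOpen_lt continuous_abs continuous_const).mem_nhds hx] with y hy
    exact mul_deriv_hyp2F1_eq_tsum ha hb hab hy

end SumOne

end Hypergeometric

/-- `y` solves the self-adjoint second-order equation `(p y')' = r y` on `s`. -/
def IsSturmLiouvilleSolution (p r y : ℝ → ℝ) (s : Set ℝ) : Prop :=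
  ∀ x ∈ s, DifferentiableAt ℝ y x ∧ HasDerivAt (fun t => p t * deriv y t) (r x * y x) x

namespace IsSturmLiouvilleSolution

variable {p r y y₁ y₂ : ℝ → ℝ} {a b x x₀ : ℝ}

lemma mul_wronskian_eq_zero (h₁ : IsSturmLiouvilleSolution p r y₁ (Set.Ioo a b))
    (h₂ : IsSturmLiouvilleSolution p r y₂ (Set.Ioo a b)) (hx₀ : x₀ ∈ Set.Ioo a b) (hp : p x₀ = 0)
    (hx : x ∈ Set.Ioo a b) : p x * (deriv y₁ x * y₂ x - y₁ x * deriv y₂ x) = 0 := by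
  have hderiv (t : ℝ) (ht : t ∈ Set.Ioo a b) :
      HasDerivAt (fun t => p t * deriv y₁ t * y₂ t - y₁ t * (p t * deriv y₂ t)) 0 t :=
    (((h₁ t ht).2.mul (h₂ t ht).1.hasDerivAt).sub
      ((h₁ t ht).1.hasDerivAt.mul (h₂ t ht).2)).congr_deriv (by ring)
  have hconst := isOpen_Ioo.is_const_of_deriv_eq_zero isPreconnected_Ioo
    (fun t ht => (hderiv t ht).differentiableAt.differentiableWithinAt)
    (fun t ht => (hderiv t ht).deriv) hx hx₀
  simp only [hp, zero_mul, mul_zero, sub_zero] at hconst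
  linear_combination hconst

-- At a singular point `p x₀ = 0`, the solutions that stay smooth form a line.
lemma mul_eq_mul (h₁ : IsSturmLiouvilleSolution p r y₁ (Set.Ioo a b))
    (h₂ : IsSturmLiouvilleSolution p r y₂ (Set.Ioo a b)) (hx₀ : a < x₀) (hp : p x₀ = 0)
    (hp' : ∀ t ∈ Set.Ioo x₀ b, p t ≠ 0) (hy₂ : ∀ t ∈ Set.Ico x₀ b, y₂ t ≠ 0)
    (hx : x ∈ Set.Ico x₀ b) : y₁ x * y₂ x₀ = y₁ x₀ * y₂ x := by
  have hmem : ∀ t ∈ Set.Icc x₀ x, t ∈ Set.Ioo a b ∧ y₂ t ≠ 0 := fun t ht =>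
    ⟨⟨hx₀.trans_le ht.1, ht.2.trans_lt hx.2⟩, hy₂ t ⟨ht.1, ht.2.trans_lt hx.2⟩⟩
  have hdiff (t : ℝ) (ht : t ∈ Set.Icc x₀ x) := (h₁ t (hmem t ht).1).1.hasDerivAt.div
    (h₂ t (hmem t ht).1).1.hasDerivAt (hmem t ht).2
  obtain rfl | hlt := hx.1.eq_or_lt
  · rfl
  obtain ⟨t, ht, hslope⟩ := exists_hasDerivAt_eq_slope (y₁ / y₂) _ hlt
    (fun t ht => (hdiff t ht).continuousAt.continuousWithinAt)
    (fun t ht => hdiff t (Set.Ioo_subset_Icc_self ht))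
  have ht' := Set.Ioo_subset_Icc_self ht
  have hwronskian := h₁.mul_wronskian_eq_zero h₂ ⟨hx₀, hx.1.trans_lt hx.2⟩ hp (hmem t ht').1
  rw [(mul_eq_zero.1 hwronskian).resolve_left (hp' t ⟨ht.1, ht.2.trans hx.2⟩), zero_div,
    eq_comm, div_eq_zero_iff, or_iff_left (sub_pos.2 hlt).ne', sub_eq_zero] at hslope
  exact (div_eq_div_iff (hy₂ x hx) (hy₂ x₀ ⟨le_rfl, hx.1.trans_lt hx.2⟩)).1 hslope

end IsSturmLiouvilleSolution

lemma isSturmLiouvilleSolution_hyp2F1 {a b : ℝ} (ha : 0 ≤ a) (hb : 0 ≤ b) (hab : a + b = 1) :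
    IsSturmLiouvilleSolution (fun x => x * (1 - x)) (fun _ => a * b) (hyp2F1 a b 1)
      (Set.Ioo (-1) 1) := fun _ hx =>
  ⟨(hasDerivAt_hyp2F1 ha hb hab (abs_lt.2 hx)).differentiableAt,
    hasDerivAt_mul_deriv_hyp2F1 ha hb hab (abs_lt.2 hx)⟩

section QuadraticTransformation

variable {F : ℝ → ℝ} {x : ℝ}

/-- The argument `8x(1 + x)/(1 + 3x)²` of the quadratic transformation in signature four. -/
noncomputable def quadArg (x : ℝ) : ℝ := 8 * x * (1 + x) / (1 + 3 * x) ^ 2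

lemma one_sub_quadArg (hx : 1 + 3 * x ≠ 0) : 1 - quadArg x = (1 - x) ^ 2 / (1 + 3 * x) ^ 2 := by
  rw [quadArg, eq_div_iff (pow_ne_zero 2 hx), sub_mul, div_mul_cancel₀ _ (pow_ne_zero 2 hx)]
  ring

-- Any left endpoint slightly below `0` would do in place of `-1 / 20`.
lemma quadArg_mem_Ioo (hx : x ∈ Set.Ioo (-1 / 20 : ℝ) 1) : quadArg x ∈ Set.Ioo (-1 : ℝ) 1 := by
  obtain ⟨hx₀, hx₁⟩ := hx
  have hden : 0 < 1 + 3 * x := by linarith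
  rw [quadArg, Set.mem_Ioo, lt_div_iff₀ (by positivity), div_lt_one (by positivity)]
  constructor
  · nlinarith [sq_nonneg x]
  · nlinarith [mul_pos (sub_pos.2 hx₁) (sub_pos.2 hx₁)]

lemma hasDerivAt_one_add_three_mul (x : ℝ) : HasDerivAt (fun x : ℝ => 1 + 3 * x) 3 x := by
  simpa using ((hasDerivAt_id x).const_mul 3).const_add 1

lemma hasDerivAt_quadArg (hx : 1 + 3 * x ≠ 0) :
    HasDerivAt quadArg (8 * (1 - x) / (1 + 3 * x) ^ 3) x := by
  have hnum : HasDerivAt (fun x : ℝ => 8 * x * (1 + x)) (8 * (1 + 2 * x)) x :=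
    (((hasDerivAt_id x).const_mul 8).mul ((hasDerivAt_id x).const_add 1)).congr_deriv
      (by simp only [id]; ring)
  refine (hnum.div ((hasDerivAt_one_add_three_mul x).pow 2) (pow_ne_zero 2 hx)).congr_deriv ?_
  obtain ⟨w, rfl⟩ : ∃ w, x = (w - 1) / 3 := ⟨1 + 3 * x, by ring⟩
  simp only [Pi.pow_apply, mul_div_cancel₀ (_ - 1 : ℝ) three_ne_zero, add_sub_cancel] at hx ⊢
  field_simp
  push_cast
  ring

variable (hF : IsSturmLiouvilleSolution (fun x => x * (1 - x)) (fun _ => 3 / 16) F (Set.Ioo (-1) 1))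
include hF

lemma hasDerivAt_comp_quadArg_div_sqrt (hx : x ∈ Set.Ioo (-1 / 20 : ℝ) 1) :
    HasDerivAt (fun x => F (quadArg x) / √(1 + 3 * x))
      (deriv F (quadArg x) * (8 * (1 - x) / (1 + 3 * x) ^ 3) / √(1 + 3 * x) -
        3 / 2 * F (quadArg x) / √(1 + 3 * x) ^ 3) x := by
  have hden : 0 < 1 + 3 * x := by linarith [hx.1]
  have hsqrt := Real.sqrt_pos.2 hden
  have hcomp := (hF _ (quadArg_mem_Ioo hx)).1.hasDerivAt.comp x (hasDerivAt_quadArg hden.ne')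
  refine (hcomp.div ((hasDerivAt_one_add_three_mul x).sqrt hden.ne') hsqrt.ne').congr_deriv ?_
  simp only [Function.comp_apply]
  field_simp

lemma mul_deriv_comp_quadArg_div_sqrt (hx : x ∈ Set.Ioo (-1 / 20 : ℝ) 1) :
    x * (1 - x ^ 2) * deriv (fun x => F (quadArg x) / √(1 + 3 * x)) x =
      √(1 + 3 * x) * (quadArg x * (1 - quadArg x) * deriv F (quadArg x)) -
        3 / 2 * (x * (1 - x ^ 2)) * F (quadArg x) / √(1 + 3 * x) ^ 3 := by
  have hden : 0 < 1 + 3 * x := by linarith [hx.1]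
  have hsqrt := Real.sqrt_pos.2 hden
  have hsq := Real.sq_sqrt hden.le
  rw [(hasDerivAt_comp_quadArg_div_sqrt hF hx).deriv, one_sub_quadArg hden.ne']
  generalize deriv F (quadArg x) = F'
  generalize F (quadArg x) = F₀
  rw [quadArg]
  generalize √(1 + 3 * x) = s at *
  rw [← hsq]
  field_simp
  ring

lemma isSturmLiouvilleSolution_comp_quadArg_div_sqrt :
    IsSturmLiouvilleSolution (fun x => x * (1 - x ^ 2)) (fun x => 3 / 4 * x)
      (fun x => F (quadArg x) / √(1 + 3 * x)) (Set.Ioo (-1 / 20) 1) := by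
  refine fun x hx => ⟨(hasDerivAt_comp_quadArg_div_sqrt hF hx).differentiableAt, ?_⟩
  have hden : 0 < 1 + 3 * x := by linarith [hx.1]
  have hsqrt := Real.sqrt_pos.2 hden
  have hsq := Real.sq_sqrt hden.le
  have hs' := (hasDerivAt_one_add_three_mul x).sqrt hden.ne'
  have hu := hasDerivAt_quadArg hden.ne'
  obtain ⟨hF₁, hF₂⟩ := hF _ (quadArg_mem_Ioo hx)
  have hp : HasDerivAt (fun x : ℝ => 3 / 2 * (x * (1 - x ^ 2))) (3 / 2 * (1 - 3 * x ^ 2)) x :=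
    (((hasDerivAt_id x).mul ((hasDerivAt_pow 2 x).const_sub 1)).const_mul (3 / 2)).congr_deriv
      (by simp only [id]; push_cast; ring)
  refine (((hs'.mul (hF₂.comp x hu)).sub ((hp.mul (hF₁.hasDerivAt.comp x hu)).div (hs'.pow 3)
    (pow_pos hsqrt 3).ne')).congr_deriv ?_).congr_of_eventuallyEq ?_
  · simp only [Function.comp_apply, Pi.mul_apply, Pi.pow_apply, one_sub_quadArg hden.ne']
    generalize deriv F (quadArg x) = F'
    generalize F (quadArg x) = F₀
    have hx' : x = (√(1 + 3 * x) ^ 2 - 1) / 3 := by linarith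
    rw [quadArg]
    generalize √(1 + 3 * x) = s at *
    rw [← hsq, hx']
    field_simp
    push_cast
    ring
  · filter_upwards [isOpen_Ioo.mem_nhds hx] with y hy
    exact mul_deriv_comp_quadArg_div_sqrt hF hy

lemma hasDerivAt_comp_sq (hx : |x| < 1) :
    HasDerivAt (fun x => F (x ^ 2)) (deriv F (x ^ 2) * (2 * x)) x := by
  have hx₂ : x ^ 2 ∈ Set.Ioo (-1 : ℝ) 1 :=
    ⟨by linarith [sq_nonneg x], (sq_lt_one_iff_abs_lt_one x).2 hx⟩
  exact (HasDerivAt.comp (h := fun x => x ^ 2) x (hF _ hx₂).1.hasDerivAt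
    (hasDerivAt_pow 2 x)).congr_deriv (by simp)

lemma isSturmLiouvilleSolution_comp_sq :
    IsSturmLiouvilleSolution (fun x => x * (1 - x ^ 2)) (fun x => 3 / 4 * x)
      (fun x => F (x ^ 2)) (Set.Ioo (-1) 1) := by
  intro x hx
  have hx₂ : x ^ 2 ∈ Set.Ioo (-1 : ℝ) 1 :=
    ⟨by linarith [sq_nonneg x], (sq_lt_one_iff_abs_lt_one x).2 (abs_lt.2 hx)⟩
  refine ⟨(hasDerivAt_comp_sq hF (abs_lt.2 hx)).differentiableAt, ?_⟩
  refine (((HasDerivAt.comp (h := fun x => x ^ 2) x (hF _ hx₂).2 (hasDerivAt_pow 2 x)).const_mul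
    2).congr_deriv (by push_cast; ring)).congr_of_eventuallyEq ?_
  filter_upwards [isOpen_Ioo.mem_nhds hx] with y hy
  rw [(hasDerivAt_comp_sq hF (abs_lt.2 hy)).deriv, Function.comp_apply]
  ring

end QuadraticTransformation

theorem hyp2F1_quadArg {x : ℝ} (hx : x ∈ Set.Ico (0 : ℝ) 1) :
    hyp2F1 (1 / 4) (3 / 4) 1 (quadArg x) = √(1 + 3 * x) * hyp2F1 (1 / 4) (3 / 4) 1 (x ^ 2) := by
  have hF : IsSturmLiouvilleSolution (fun x => x * (1 - x)) (fun _ => 3 / 16)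
      (hyp2F1 (1 / 4) (3 / 4) 1) (Set.Ioo (-1) 1) := by
    convert isSturmLiouvilleSolution_hyp2F1 (a := 1 / 4) (b := 3 / 4) _ _ _ using 2 <;> norm_num
  have hne (t : ℝ) (ht : t ∈ Set.Ico (0 : ℝ) 1) : hyp2F1 (1 / 4) (3 / 4) 1 (t ^ 2) ≠ 0 :=
    (one_pos.trans_le (one_le_hyp2F1 (by norm_num) (by norm_num) (by norm_num)
      ⟨sq_nonneg t, pow_lt_one₀ ht.1 ht.2 two_ne_zero⟩)).ne'
  have hprop := (isSturmLiouvilleSolution_comp_quadArg_div_sqrt hF).mul_eq_mul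
    (fun t ht => isSturmLiouvilleSolution_comp_sq hF t ⟨by linarith [ht.1], ht.2⟩)
    (by norm_num) (by simp) (fun t ht => mul_ne_zero ht.1.ne' (by nlinarith [ht.1, ht.2])) hne hx
  have hsqrt : 0 < √(1 + 3 * x) := Real.sqrt_pos.2 (by linarith [hx.1])
  have hzero : quadArg 0 = 0 := by simp [quadArg]
  simp only [hzero, hyp2F1_zero, ne_eq, OfNat.ofNat_ne_zero, not_false_eq_true, zero_pow, mul_zero,
    add_zero, Real.sqrt_one, div_one, mul_one, one_mul] at hprop
  rw [← hprop, mul_div_cancel₀ _ hsqrt.ne']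

/-! ### Theta functions of signature four -/

section SignatureFour

/-- The theta function `φ(q)⁴ + 16 q ψ(q²)⁴`, which is the square of `₂F₁(1/4, 3/4; 1; ·)` at the
modulus of signature four. -/
noncomputable def quarticTheta (q : ℝ) : ℝ := ramanujanPhi q ^ 4 + 16 * q * ramanujanPsi (q ^ 2) ^ 4

/-- The modulus of signature four as a function of its nome. -/
noncomputable def quarticModulus (q : ℝ) : ℝ := 64 * q * ramanujanPsi q ^ 8 / quarticTheta q ^ 2

variable {q : ℝ}

lemma ramanujanPhi_neg_sq (hq : q ∈ Set.Ioo (0 : ℝ) 1) :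
    ramanujanPhi (-q) ^ 2 = ramanujanPhi (q ^ 2) ^ 2 - 4 * q * ramanujanPsi (q ^ 4) ^ 2 := by
  have h := ramanujanPhi_sq (q := -q) (by simpa using pow_mem_Ioo hq two_ne_zero)
  rw [neg_sq, Even.neg_pow (by decide)] at h
  linear_combination h

lemma ramanujanPhi_pow_four_add (hq : q ∈ Set.Ioo (0 : ℝ) 1) :
    ramanujanPhi q ^ 4 + ramanujanPhi (-q) ^ 4 = 2 * quarticTheta (q ^ 2) := by
  have hφ := ramanujanPhi_sq (pow_mem_Ioo hq two_ne_zero)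
  have hφn := ramanujanPhi_neg_sq hq
  rw [quarticTheta, ← pow_mul]
  linear_combination
    (ramanujanPhi q ^ 2 + ramanujanPhi (q ^ 2) ^ 2 + 4 * q * ramanujanPsi (q ^ 4) ^ 2) * hφ +
    (ramanujanPhi (-q) ^ 2 + ramanujanPhi (q ^ 2) ^ 2 - 4 * q * ramanujanPsi (q ^ 4) ^ 2) * hφn

lemma ramanujanPhi_pow_four_sub (hq : q ∈ Set.Ioo (0 : ℝ) 1) :
    ramanujanPhi q ^ 4 - ramanujanPhi (-q) ^ 4 = 16 * q * ramanujanPsi (q ^ 2) ^ 4 := by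
  have hφ := ramanujanPhi_sq (pow_mem_Ioo hq two_ne_zero)
  have hφn := ramanujanPhi_neg_sq hq
  have hψ := ramanujanPsi_sq (pow_mem_Ioo hq two_ne_zero)
  rw [← pow_mul] at hψ
  linear_combination
    (ramanujanPhi q ^ 2 + ramanujanPhi (q ^ 2) ^ 2 + 4 * q * ramanujanPsi (q ^ 4) ^ 2) * hφ -
    (ramanujanPhi (-q) ^ 2 + ramanujanPhi (q ^ 2) ^ 2 - 4 * q * ramanujanPsi (q ^ 4) ^ 2) * hφn -
    16 * q * (ramanujanPsi (q ^ 2) ^ 2 + ramanujanPhi (q ^ 2) * ramanujanPsi (q ^ 4)) * hψ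

lemma ramanujanPsi_pow_eight (hq : q ∈ Set.Ioo (0 : ℝ) 1) :
    64 * q * ramanujanPsi q ^ 8 =
      4 * ramanujanPhi q ^ 4 * (16 * q * ramanujanPsi (q ^ 2) ^ 4) := by
  rw [pow_mul _ 2 4, ramanujanPsi_sq hq]
  ring

lemma quarticTheta_sq (hq : q ∈ Set.Ioo (0 : ℝ) 1) :
    quarticTheta q ^ 2 = 64 * q * ramanujanPsi q ^ 8 + ramanujanPhi (-q) ^ 8 := by
  rw [ramanujanPsi_pow_eight hq, pow_mul _ 4 2, quarticTheta, ← ramanujanPhi_pow_four_sub hq]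
  ring

lemma quarticTheta_pos (hq : q ∈ Set.Ioo (0 : ℝ) 1) : 0 < quarticTheta q :=
  add_pos_of_nonneg_of_pos (by positivity)
    (mul_pos (mul_pos (by norm_num) hq.1)
      (pow_pos (ramanujanPsi_pos (pow_mem_Ioo hq two_ne_zero)) 4))

lemma quarticModulus_mem_Ico (hq : q ∈ Set.Ioo (0 : ℝ) 1) :
    quarticModulus q ∈ Set.Ico (0 : ℝ) 1 := by
  have hφ := ramanujanPhi_neg_pos hq
  have hψ := ramanujanPsi_pos hq
  have hq0 := hq.1
  have hθ := quarticTheta_pos hq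
  refine ⟨by unfold quarticModulus; positivity, ?_⟩
  rw [quarticModulus, div_lt_one (by positivity), quarticTheta_sq hq]
  exact lt_add_of_pos_right _ (by positivity)

lemma quarticModulus_sq (hq : q ∈ Set.Ioo (0 : ℝ) 1) :
    quarticModulus (q ^ 2) = ((ramanujanPhi q ^ 4 - ramanujanPhi (-q) ^ 4) /
      (ramanujanPhi q ^ 4 + ramanujanPhi (-q) ^ 4)) ^ 2 := by
  rw [quarticModulus, ramanujanPhi_pow_four_add hq, ramanujanPhi_pow_four_sub hq, div_pow]
  field_simp
  ring

theorem hyp2F1_quarticModulus_sq_div (hq : q ∈ Set.Ioo (0 : ℝ) 1) :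
    hyp2F1 (1 / 4) (3 / 4) 1 (quarticModulus q) ^ 2 / quarticTheta q =
      hyp2F1 (1 / 4) (3 / 4) 1 (quarticModulus (q ^ 2)) ^ 2 / quarticTheta (q ^ 2) := by
  set x := (ramanujanPhi q ^ 4 - ramanujanPhi (-q) ^ 4) /
    (ramanujanPhi q ^ 4 + ramanujanPhi (-q) ^ 4) with hx
  have hB : 0 < ramanujanPhi (-q) ^ 4 := pow_pos (ramanujanPhi_neg_pos hq) 4
  have hsub : 0 < ramanujanPhi q ^ 4 - ramanujanPhi (-q) ^ 4 := by
    have := ramanujanPsi_pos (pow_mem_Ioo hq two_ne_zero)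
    have := hq.1
    rw [ramanujanPhi_pow_four_sub hq]
    positivity
  have hsum : 0 < ramanujanPhi q ^ 4 + ramanujanPhi (-q) ^ 4 := by linarith
  have hθ₂ : quarticTheta (q ^ 2) = (ramanujanPhi q ^ 4 + ramanujanPhi (-q) ^ 4) / 2 := by
    rw [ramanujanPhi_pow_four_add hq, mul_div_cancel_left₀ _ two_ne_zero]
  have hθ₁ : quarticTheta q = (1 + 3 * x) * quarticTheta (q ^ 2) := by
    rw [hθ₂, hx, quarticTheta, ← ramanujanPhi_pow_four_sub hq]
    field_simp
    ring
  have hx01 : x ∈ Set.Ico (0 : ℝ) 1 := ⟨by positivity, by rw [hx, div_lt_one hsum]; linarith⟩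
  have hx₃ : 0 < 1 + 3 * x := by linarith [hx01.1]
  have hα : quarticModulus q = quadArg x := by
    rw [quarticModulus, ramanujanPsi_pow_eight hq, ← ramanujanPhi_pow_four_sub hq, hθ₁, hθ₂,
      quadArg, hx]
    field_simp
    ring
  rw [quarticModulus_sq hq, ← hx, hα, hyp2F1_quadArg hx01, hθ₁, mul_pow, Real.sq_sqrt hx₃.le,
    mul_div_mul_left _ _ hx₃.ne']

end SignatureFour

section Limits

lemma triangular_nonneg (n : ℤ) : 0 ≤ triangular n := by
  obtain hn | hn := le_or_gt n 0 <;> nlinarith [two_mul_triangular n]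

lemma continuousAt_tsum_pow {ι : Type*} {e : ι → ℕ} {r : ℝ} (hr : 0 < r)
    (he : Summable fun i => r ^ e i) : ContinuousAt (fun q : ℝ => ∑' i, q ^ e i) 0 := by
  refine (continuousOn_tsum (s := Set.Icc (-r) r) (fun i => (continuous_pow (e i)).continuousOn) he
    fun i q hq => ?_).continuousAt (Icc_mem_nhds (by linarith) hr)
  rw [norm_pow]
  exact pow_le_pow_left₀ (norm_nonneg q) (abs_le.2 hq) _

/-- The exponent of `q` in the `n`-th term of `theta (q ^ a) (q ^ b)`, for `a ≤ b`. -/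
def thetaExponent (a b : ℕ) (n : ℤ) : ℕ := ((b - a) * triangular n + a * triangular (n + 1)).toNat

lemma thetaTerm_pow_pow {a b : ℕ} (hab : a ≤ b) {q : ℝ} (hq : q ≠ 0) (n : ℤ) :
    thetaTerm (q ^ a) (q ^ b) n = q ^ thetaExponent a b n := by
  have hexp : (0 : ℤ) ≤ (b - a) * triangular n + a * triangular (n + 1) := by
    have := triangular_nonneg n
    have := triangular_nonneg (n + 1)
    have : (0 : ℤ) ≤ b - a := by lia
    positivity
  rw [thetaTerm, ← zpow_natCast q a, ← zpow_natCast q b, ← zpow_mul, ← zpow_mul, ← zpow_add₀ hq,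
    ← zpow_natCast, thetaExponent, Int.toNat_of_nonneg hexp, triangular_add,
    show triangular 1 = 0 from rfl]
  ring_nf

lemma tendsto_theta_nhdsGT_zero {a b : ℕ} (hab : a ≤ b) (hb : b ≠ 0) :
    Tendsto (fun q : ℝ => theta (q ^ a) (q ^ b)) (𝓝[>] 0)
      (𝓝 (∑' n : ℤ, (0 : ℝ) ^ thetaExponent a b n)) := by
  have hr : (1 / 2 : ℝ) ∈ Set.Ioo (0 : ℝ) 1 := by norm_num
  have hsum : Summable fun n => (1 / 2 : ℝ) ^ thetaExponent a b n :=
    (summable_thetaTerm (pow_ne_zero a hr.1.ne') (pow_mem_Ioo hr hb)).congr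
      (thetaTerm_pow_pow hab hr.1.ne')
  refine ((continuousAt_tsum_pow hr.1 hsum).mono_left nhdsWithin_le_nhds).congr' ?_
  filter_upwards [self_mem_nhdsWithin] with q hq
  exact tsum_congr fun n => (thetaTerm_pow_pow hab (ne_of_gt hq) n).symm

lemma thetaExponent_one_two (n : ℤ) : (thetaExponent 1 2 n : ℤ) = n ^ 2 := by
  have := two_mul_triangular n
  rw [thetaExponent, triangular_add, show triangular 1 = 0 from rfl,
    show ((2 : ℕ) - (1 : ℕ)) * triangular n + (1 : ℕ) * (triangular n + 0 + n * 1) = n ^ 2 by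
      push_cast; linarith, Int.toNat_of_nonneg (sq_nonneg n)]

lemma tendsto_ramanujanPhi_nhdsGT_zero : Tendsto ramanujanPhi (𝓝[>] 0) (𝓝 1) := by
  have h := tendsto_theta_nhdsGT_zero one_le_two two_ne_zero
  have hexp (n : ℤ) (hn : n ≠ 0) : thetaExponent 1 2 n ≠ 0 := by
    rw [← Nat.cast_ne_zero (R := ℤ), thetaExponent_one_two]
    exact pow_ne_zero 2 hn
  rw [tsum_eq_single 0 fun n hn => zero_pow (hexp n hn), show thetaExponent 1 2 0 = 0 from rfl,
    pow_zero] at h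
  simp only [pow_one] at h
  exact h

lemma exists_tendsto_ramanujanPsi_nhdsGT_zero : ∃ l, Tendsto ramanujanPsi (𝓝[>] 0) (𝓝 l) := by
  have h := (tendsto_theta_nhdsGT_zero zero_le_one one_ne_zero).div_const 2
  simp only [pow_zero, pow_one] at h
  exact ⟨_, h⟩

lemma tendsto_quarticTheta_nhdsGT_zero : Tendsto quarticTheta (𝓝[>] 0) (𝓝 1) := by
  obtain ⟨l, hψ⟩ := exists_tendsto_ramanujanPsi_nhdsGT_zero
  have hid : Tendsto (fun q : ℝ => q) (𝓝[>] 0) (𝓝 0) := nhdsWithin_le_nhds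
  have hsq : Tendsto (fun q : ℝ => q ^ 2) (𝓝[>] 0) (𝓝[>] 0) :=
    tendsto_nhdsWithin_iff.2 ⟨by simpa using hid.pow 2,
      by filter_upwards [self_mem_nhdsWithin] with q hq using pow_pos (Set.mem_Ioi.1 hq) 2⟩
  have h := (tendsto_ramanujanPhi_nhdsGT_zero.pow 4).add
    ((hid.const_mul 16).mul ((hψ.comp hsq).pow 4))
  simp only [one_pow, mul_zero, zero_mul, add_zero] at h
  exact h

lemma tendsto_quarticModulus_nhdsGT_zero : Tendsto quarticModulus (𝓝[>] 0) (𝓝 0) := by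
  obtain ⟨l, hψ⟩ := exists_tendsto_ramanujanPsi_nhdsGT_zero
  have hid : Tendsto (fun q : ℝ => q) (𝓝[>] 0) (𝓝 0) := nhdsWithin_le_nhds
  have h := ((hid.const_mul 64).mul (hψ.pow 8)).div (tendsto_quarticTheta_nhdsGT_zero.pow 2)
    (by norm_num)
  simp only [mul_zero, zero_mul, zero_div] at h
  exact h

lemma eq_of_tendsto_nhdsGT_zero_of_eq_sq {X : Type*} [TopologicalSpace X] [T2Space X] {f : ℝ → X}
    {l : X} (hf : ∀ q ∈ Set.Ioo (0 : ℝ) 1, f q = f (q ^ 2)) (hl : Tendsto f (𝓝[>] 0) (𝓝 l)) {q : ℝ}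
    (hq : q ∈ Set.Ioo (0 : ℝ) 1) : f q = l := by
  have hiter (n : ℕ) : f (q ^ 2 ^ n) = f q := by
    induction n with
    | zero => rw [pow_zero, pow_one]
    | succ n ih => rw [pow_succ, pow_mul, ← hf _ (pow_mem_Ioo hq (by positivity)), ih]
  have hzero : Tendsto (fun n : ℕ => q ^ 2 ^ n) atTop (𝓝[>] 0) :=
    tendsto_nhdsWithin_iff.2 ⟨(tendsto_pow_atTop_nhds_zero_of_lt_one hq.1.le hq.2).comp
      (tendsto_pow_atTop_atTop_of_one_lt one_lt_two), .of_forall fun n => pow_pos hq.1 _⟩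
  exact tendsto_nhds_unique (tendsto_const_nhds.congr fun n => (hiter n).symm) (hl.comp hzero)

theorem hyp2F1_quarticModulus_sq {q : ℝ} (hq : q ∈ Set.Ioo (0 : ℝ) 1) :
    hyp2F1 (1 / 4) (3 / 4) 1 (quarticModulus q) ^ 2 = quarticTheta q := by
  have hcont : ContinuousAt (hyp2F1 (1 / 4) (3 / 4) 1) 0 :=
    (hasDerivAt_hyp2F1 (by norm_num) (by norm_num) (by norm_num) (by simp)).continuousAt
  have hlim := ((hcont.tendsto.comp tendsto_quarticModulus_nhdsGT_zero).pow 2).div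
    tendsto_quarticTheta_nhdsGT_zero one_ne_zero
  rw [hyp2F1_zero, one_pow, div_one] at hlim
  exact (div_eq_one_iff_eq (quarticTheta_pos hq).ne').1
    (eq_of_tendsto_nhdsGT_zero_of_eq_sq (fun _ => hyp2F1_quarticModulus_sq_div) hlim hq)

end Limits

/-! ### The Fricke involution and the nome -/

section Fricke

variable {a q : ℝ}

lemma exp_neg_pi_mul_mem_Ioo (ha : 0 < a) : Real.exp (-π * a) ∈ Set.Ioo (0 : ℝ) 1 :=
  ⟨Real.exp_pos _, Real.exp_lt_one_iff.2 (mul_neg_of_neg_of_pos (neg_lt_zero.2 Real.pi_pos) ha)⟩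

lemma exp_neg_pi_mul_div_four_pow_four (a : ℝ) :
    Real.exp (-π * (a / 4)) ^ 4 = Real.exp (-π * a) := by
  rw [← Real.exp_nat_mul]
  ring_nf

lemma ramanujanPhi_exp (a : ℝ) :
    ramanujanPhi (Real.exp (-π * a)) = ∑' n : ℤ, Real.exp (-π * a * n ^ 2) := by
  refine tsum_congr fun n => ?_
  have hterm := thetaTerm_pow_pow one_le_two (Real.exp_pos (-π * a)).ne' n
  rw [pow_one] at hterm
  rw [hterm, ← Real.exp_nat_mul, ← Int.cast_natCast, thetaExponent_one_two, Int.cast_pow, mul_comm]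

lemma sqrt_mul_ramanujanPhi_exp (ha : 0 < a) :
    √a * ramanujanPhi (Real.exp (-π * a)) = ramanujanPhi (Real.exp (-π * a⁻¹)) := by
  rw [ramanujanPhi_exp, ramanujanPhi_exp, Real.tsum_exp_neg_mul_int_sq ha, Real.sqrt_eq_rpow,
    ← mul_assoc, mul_one_div_cancel (Real.rpow_pos_of_pos ha _).ne', one_mul]
  rfl

lemma sqrt_mul_ramanujanPsi_exp (ha : 0 < a) :
    √a * (2 * Real.exp (-π * (a / 4)) * ramanujanPsi (Real.exp (-π * a) ^ 2)) =
      ramanujanPhi (-Real.exp (-π * a⁻¹)) := by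
  set r := Real.exp (-π * (a / 4)) with hr
  set Q := Real.exp (-π * a⁻¹) with hQ
  have hr4 : r ^ 4 = Real.exp (-π * a) := exp_neg_pi_mul_div_four_pow_four a
  have hQ4 : Real.exp (-π * (a / 4)⁻¹) = Q ^ 4 := by
    rw [hQ, ← Real.exp_nat_mul, inv_div]
    ring_nf
  have hsqrt : √(a / 4) = √a / 2 := by
    rw [Real.sqrt_div ha.le, show (4 : ℝ) = 2 ^ 2 by norm_num, Real.sqrt_sq zero_le_two]
  have hφr := ramanujanPhi_eq_add
    (pow_mem_Ioo (exp_neg_pi_mul_mem_Ioo (div_pos ha four_pos)) two_ne_zero)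
  have hQ2 : Q ^ 2 ∈ Set.Ioo (0 : ℝ) 1 :=
    pow_mem_Ioo (exp_neg_pi_mul_mem_Ioo (inv_pos.2 ha)) two_ne_zero
  have hφQ := ramanujanPhi_eq_add hQ2
  have hφnQ := ramanujanPhi_eq_add (q := -Q) (by rwa [neg_sq])
  have htrans := sqrt_mul_ramanujanPhi_exp ha
  have htrans4 := sqrt_mul_ramanujanPhi_exp (div_pos ha four_pos)
  rw [Even.neg_pow (by decide), Even.neg_pow (by decide)] at hφnQ
  rw [← hr4, ← hQ] at htrans
  rw [← hr, hQ4, hsqrt, hφr] at htrans4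
  rw [← hr4, ← pow_mul]
  linear_combination 2 * htrans4 - htrans - hφQ - hφnQ

lemma sq_mul_ramanujanPhi_exp_pow_four (ha : 0 < a) :
    a ^ 2 * ramanujanPhi (Real.exp (-π * a)) ^ 4 = ramanujanPhi (Real.exp (-π * a⁻¹)) ^ 4 := by
  rw [← sqrt_mul_ramanujanPhi_exp ha, mul_pow, pow_mul √a 2 2, Real.sq_sqrt ha.le]

lemma sq_mul_ramanujanPsi_exp_pow_four (ha : 0 < a) :
    a ^ 2 * (16 * Real.exp (-π * a) * ramanujanPsi (Real.exp (-π * a) ^ 2) ^ 4) =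
      ramanujanPhi (-Real.exp (-π * a⁻¹)) ^ 4 := by
  rw [← sqrt_mul_ramanujanPsi_exp ha, mul_pow, pow_mul √a 2 2, Real.sq_sqrt ha.le,
    ← exp_neg_pi_mul_div_four_pow_four a]
  ring

lemma quarticTheta_fricke (ha : 0 < a) :
    quarticTheta (Real.exp (-π * a⁻¹) ^ 2) = a ^ 2 / 2 * quarticTheta (Real.exp (-π * a)) := by
  have hadd := ramanujanPhi_pow_four_add (exp_neg_pi_mul_mem_Ioo (inv_pos.2 ha))
  rw [← sq_mul_ramanujanPhi_exp_pow_four ha, ← sq_mul_ramanujanPsi_exp_pow_four ha, ← mul_add,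
    ← quarticTheta] at hadd
  linear_combination -hadd / 2

lemma quarticModulus_fricke (ha : 0 < a) :
    quarticModulus (Real.exp (-π * a⁻¹) ^ 2) = 1 - quarticModulus (Real.exp (-π * a)) := by
  have hq := exp_neg_pi_mul_mem_Ioo ha
  have hθ := quarticTheta_pos hq
  rw [quarticModulus_sq (exp_neg_pi_mul_mem_Ioo (inv_pos.2 ha)),
    ← sq_mul_ramanujanPhi_exp_pow_four ha, ← sq_mul_ramanujanPsi_exp_pow_four ha, ← mul_add,
    ← mul_sub, mul_div_mul_left _ _ (pow_pos ha 2).ne', ← quarticTheta, quarticModulus,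
    ramanujanPsi_pow_eight hq, eq_sub_iff_add_eq, div_pow, ← add_div, div_eq_one_iff_eq
    (pow_pos hθ 2).ne', quarticTheta]
  ring

lemma one_le_hyp2F1_quarticModulus (hq : q ∈ Set.Ioo (0 : ℝ) 1) :
    1 ≤ hyp2F1 (1 / 4) (3 / 4) 1 (quarticModulus q) :=
  one_le_hyp2F1 (by norm_num) (by norm_num) (by norm_num) (quarticModulus_mem_Ico hq)

lemma hyp2F1_one_sub_quarticModulus_exp (ha : 0 < a) :
    hyp2F1 (1 / 4) (3 / 4) 1 (1 - quarticModulus (Real.exp (-π * a))) =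
      a / √2 * hyp2F1 (1 / 4) (3 / 4) 1 (quarticModulus (Real.exp (-π * a))) := by
  have hq := exp_neg_pi_mul_mem_Ioo ha
  have hQ := pow_mem_Ioo (exp_neg_pi_mul_mem_Ioo (inv_pos.2 ha)) two_ne_zero
  rw [← quarticModulus_fricke ha]
  refine (pow_left_inj₀ (zero_le_one.trans (one_le_hyp2F1_quarticModulus hQ))
    (mul_nonneg (by positivity) (zero_le_one.trans (one_le_hyp2F1_quarticModulus hq)))
    two_ne_zero).1 ?_
  rw [mul_pow, div_pow, Real.sq_sqrt zero_le_two, hyp2F1_quarticModulus_sq hQ,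
    hyp2F1_quarticModulus_sq hq, quarticTheta_fricke ha]

theorem nome4_quarticModulus (hq : q ∈ Set.Ioo (0 : ℝ) 1) : nome4 (quarticModulus q) = q := by
  obtain ⟨a, ha, rfl⟩ : ∃ a > 0, Real.exp (-π * a) = q :=
    ⟨-Real.log q / π, div_pos (neg_pos.2 (Real.log_neg hq.1 hq.2)) Real.pi_pos, by
      rw [neg_mul, mul_div_cancel₀ _ Real.pi_ne_zero, neg_neg, Real.exp_log hq.1]⟩
  have hF := (zero_lt_one.trans_le (one_le_hyp2F1_quarticModulus hq)).ne'
  rw [nome4, hyp2F1_one_sub_quarticModulus_exp ha]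
  generalize hyp2F1 (1 / 4) (3 / 4) 1 (quarticModulus (Real.exp (-π * a))) = F at hF ⊢
  congr 1
  field_simp

end Fricke

/-! ### The modulus in terms of `k` -/

section Parametrization

variable {q : ℝ}

lemma one_add_sub_sq_ramanujanK_pos (hq : q ∈ Set.Ioo (0 : ℝ) 1) :
    0 < 1 + ramanujanK q - ramanujanK q ^ 2 := by
  nlinarith [ramanujanK_pos hq, ramanujanK_lt_one hq]

lemma mul_qPochInfR_pow_six (hq : q ∈ Set.Ioo (0 : ℝ) 1) :
    q * (1 - ramanujanK q ^ 2) * (1 + ramanujanK q - ramanujanK q ^ 2) *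
      qPochInfR q (q ^ 2) ^ 6 =
    ramanujanK q * (1 - 4 * ramanujanK q - ramanujanK q ^ 2) * qPochInfR (q ^ 5) (q ^ 10) ^ 6 := by
  have hφ₅ : ramanujanPhi (-q ^ 5) = ramanujanPsi (q ^ 5) * qPochInfR (q ^ 5) (q ^ 10) ^ 3 := by
    simpa only [← pow_mul, Nat.reduceMul] using
      ramanujanPhi_neg_eq_ramanujanPsi (pow_mem_Ioo hq (by decide : 5 ≠ 0))
  have hψ := ramanujanK_mul_ramanujanPsi_sq hq
  have hφ := one_sub_ramanujanK_sq_mul_ramanujanPhi_neg_sq hq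
  rw [ramanujanPhi_neg_eq_ramanujanPsi hq, hφ₅] at hφ
  refine mul_right_cancel₀ (pow_pos (ramanujanPsi_pos hq) 2).ne' ?_
  linear_combination q * (1 + ramanujanK q - ramanujanK q ^ 2) * hφ -
    (1 - 4 * ramanujanK q - ramanujanK q ^ 2) * qPochInfR (q ^ 5) (q ^ 10) ^ 6 * hψ

lemma ramanujanK_mul_qPochInfR_pow (hq : q ∈ Set.Ioo (0 : ℝ) 1) :
    ramanujanK q * (1 + ramanujanK q - ramanujanK q ^ 2) ^ 5 * qPochInfR q (q ^ 2) ^ 24 =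
      q * (1 - ramanujanK q ^ 2) * (1 - 4 * ramanujanK q - ramanujanK q ^ 2) ^ 5 := by
  have hk := ramanujanK_pos hq
  have hχ := qPochInfR_self_sq_pos hq
  have hk₂ : 0 < 1 - ramanujanK q ^ 2 := by nlinarith [ramanujanK_lt_one hq]
  have hq0 := hq.1
  have h₁ := congrArg (· ^ 5) (mul_qPochInfR_pow_six hq)
  have h₂ := congrArg (· ^ 6) (mul_one_sub_ramanujanK_sq_mul_qPochInfR hq)
  simp only [mul_pow] at h₁ h₂
  refine mul_left_cancel₀
    (by positivity : q ^ 5 * (1 - ramanujanK q ^ 2) ^ 5 * qPochInfR q (q ^ 2) ^ 6 ≠ 0) ?_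
  linear_combination ramanujanK q * h₁ - (1 - 4 * ramanujanK q - ramanujanK q ^ 2) ^ 5 * h₂

lemma quarticModulus_eq_div (hq : q ∈ Set.Ioo (0 : ℝ) 1) :
    quarticModulus q = 64 * q / (64 * q + qPochInfR q (q ^ 2) ^ 24) := by
  rw [quarticModulus, quarticTheta_sq hq, ramanujanPhi_neg_eq_ramanujanPsi hq, mul_pow, ← pow_mul,
    mul_comm (ramanujanPsi q ^ 8), ← add_mul, mul_div_mul_right _ _
    (pow_pos (ramanujanPsi_pos hq) 8).ne']

theorem quarticModulus_eq_ramanujanK (hq : q ∈ Set.Ioo (0 : ℝ) 1) :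
    quarticModulus q = 64 * ramanujanK q * (1 + ramanujanK q - ramanujanK q ^ 2) ^ 5 /
      ((1 + ramanujanK q ^ 2) ^ 2 *
        ((1 + 11 * ramanujanK q - ramanujanK q ^ 2) ^ 2 - 125 * ramanujanK q ^ 2) ^ 2) := by
  have hq0 := hq.1
  have hk := ramanujanK_pos hq
  have hA := one_add_sub_sq_ramanujanK_pos hq
  have hχ := qPochInfR_self_sq_pos hq
  have hden : 64 * ramanujanK q * (1 + ramanujanK q - ramanujanK q ^ 2) ^ 5 +
      (1 - ramanujanK q ^ 2) * (1 - 4 * ramanujanK q - ramanujanK q ^ 2) ^ 5 =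
      (1 + ramanujanK q ^ 2) ^ 2 *
        ((1 + 11 * ramanujanK q - ramanujanK q ^ 2) ^ 2 - 125 * ramanujanK q ^ 2) ^ 2 := by ring
  have hB : (1 - ramanujanK q ^ 2) * (1 - 4 * ramanujanK q - ramanujanK q ^ 2) ^ 5 =
      ramanujanK q * (1 + ramanujanK q - ramanujanK q ^ 2) ^ 5 * qPochInfR q (q ^ 2) ^ 24 / q := by
    rw [eq_div_iff hq0.ne', ramanujanK_mul_qPochInfR_pow hq]
    ring
  rw [← hden, hB, quarticModulus_eq_div hq]
  field_simp

end Parametrization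

theorem Rq_inversion_formula_general {q : ℝ} (hq : q ∈ Set.Ioo (0 : ℝ) 1) :
    Rq q ^ 5 = ramanujanK q * (1 - ramanujanK q) ^ 2 / (1 + ramanujanK q) ^ 2 ∧
      q = nome4 (64 * ramanujanK q * (1 + ramanujanK q - ramanujanK q ^ 2) ^ 5 /
        ((1 + ramanujanK q ^ 2) ^ 2 *
          ((1 + 11 * ramanujanK q - ramanujanK q ^ 2) ^ 2 - 125 * ramanujanK q ^ 2) ^ 2)) :=
  ⟨Rq_pow_five_eq hq, by rw [← quarticModulus_eq_ramanujanK hq, nome4_quarticModulus hq]⟩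

theorem Rq_inversion_formula :
    ∃ ε > 0, ∀ q : ℝ, 0 < q → q < ε →
      Rq q ^ 5 = (Rq q * Rq (q ^ 2) ^ 2) * (1 - Rq q * Rq (q ^ 2) ^ 2) ^ 2
          / (1 + Rq q * Rq (q ^ 2) ^ 2) ^ 2
        ∧ q = nome4 (64 * (Rq q * Rq (q ^ 2) ^ 2)
            * (1 + (Rq q * Rq (q ^ 2) ^ 2) - (Rq q * Rq (q ^ 2) ^ 2) ^ 2) ^ 5
            / ((1 + (Rq q * Rq (q ^ 2) ^ 2) ^ 2) ^ 2
              * ((1 + 11 * (Rq q * Rq (q ^ 2) ^ 2)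
                  - (Rq q * Rq (q ^ 2) ^ 2) ^ 2) ^ 2
                - 125 * (Rq q * Rq (q ^ 2) ^ 2) ^ 2) ^ 2)) :=
  ⟨1, one_pos, fun _ h0 h1 => Rq_inversion_formula_general ⟨h0, h1⟩⟩
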